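/- arXiv:1512.03732 — 7 statements merged into one kernel-verified Lean document; each statement's English description precedes it below -/
import Mathlib

section
/- There exist constants A > 5 and B > 1 such that for every k ∈ ℕ and every natural number n > 2k one has Σ_{j∈ℕ, j≤k, j ≤ 5k²/n} a_{k,j}·binom(n, k−j) ≤ Q_k(n) ≤ B·Σ_{j∈ℕ, j≤k, j ≤ A·k²/n} a_{k,j}·binom(n, k−j). -/
open Finset

noncomputable section

/-- The generating set `S = {(1,0),(-1,0),(0,1),(0,-1)}` of ℤ². -/
def Sfin : Finset (ℤ × ℤ) := {(1,0), (-1,0), (0,1), (0,-1)}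

/-- `Q u n = E |u(S_n)|²` for the simple random walk on ℤ² started at 0. -/
noncomputable def Q (u : ℤ × ℤ → ℂ) (n : ℕ) : ℝ :=
  (4 : ℝ)⁻¹ ^ n * ∑ s ∈ Fintype.piFinset (fun _ : Fin n => Sfin), ‖u (∑ i, s i)‖ ^ 2

/-- Generalized binomial coefficient `binom(x,k) = (1/k!)·∏_{j<k}(x-j)`. -/
noncomputable def gbinom (x : ℝ) (k : ℕ) : ℝ :=
  (∏ j ∈ Finset.range k, (x - j)) / (Nat.factorial k)

/-- `F_k(x) = binom(x + (k-1)/2, k)`, a discretization of `x^k/k!`. -/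
noncomputable def F (k : ℕ) (x : ℝ) : ℝ := gbinom (x + ((k : ℝ) - 1) / 2) k

/-- `Z_k(x,y) = Σ_{l=0}^k i^l F_{k-l}(x) F_l(y)`, a harmonic discretization of `z^k/k!`. -/
noncomputable def Z (k : ℕ) (x y : ℝ) : ℂ :=
  ∑ l ∈ Finset.range (k + 1), Complex.I ^ l * (F (k - l) x : ℂ) * (F l y : ℂ)

/-- `Q_k := Q_{Z_k}` (with `Z_k` restricted to ℤ²). -/
noncomputable def Qk (k : ℕ) (n : ℕ) : ℝ := Q (fun p => Z k p.1 p.2) n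

/-- Forward difference operator: `fwd f n = f (n+1) - f n`. -/
def fwd (f : ℕ → ℝ) : ℕ → ℝ := fun n => f (n + 1) - f n

/-- Newton coefficients `a_{k,j} = Q_k^{(k-j)}(0)`. -/
noncomputable def a (k j : ℕ) : ℝ := fwd^[k - j] (Qk k) 0

open PowerSeries in
/-- coefficients of `(1+ε X²/4)^(-1/2)` -/
def ps (ε : ℝ) : ℕ → ℝ
  | 0 => 1
  | 1 => 0
  | (j+2) => -ε * ((j:ℝ)+1) / (4 * ((j:ℝ)+2)) * ps ε j

def gs : ℕ → ℝ
  | 0 => 1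
  | 1 => 0
  | 2 => 0
  | 3 => 0
  | (j+4) => gs j / 16

abbrev PS := PowerSeries ℝ

def P (ε : ℝ) : PS := PowerSeries.mk (ps ε)
def q (ε : ℝ) : PS := 1 + PowerSeries.C (ε/4) * PowerSeries.X ^ 2
def Aa (ε : ℝ) : PS := q ε * P ε
def gg : PS := PowerSeries.mk gs
def hh : PS := P 1 * P (-1)

lemma ps_bound (ε : ℝ) (hε : |ε| = 1) : ∀ j, |ps ε j| ≤ (1/2)^j
  | 0 => by simp [ps]
  | 1 => by simp [ps]
  | (j+2) => by
    have ih := ps_bound ε hε j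
    rw [ps, abs_mul, abs_div, abs_mul, abs_neg, hε, abs_of_pos (by positivity : (0:ℝ) < (j:ℝ)+1),
      abs_of_pos (by positivity : (0:ℝ) < 4 * ((j:ℝ)+2)), pow_add, mul_comm]
    have : 1 * ((j:ℝ)+1) / (4 * ((j:ℝ)+2)) ≤ (1/2)^2 := by
      rw [div_le_iff₀ (by positivity)]; nlinarith
    exact mul_le_mul ih this (by positivity) (by positivity)

lemma gs_bound : ∀ j, |gs j| ≤ (1/2)^j
  | 0 => by simp [gs]
  | 1 => by simp [gs]
  | 2 => by simp [gs]
  | 3 => by simp [gs]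
  | (j+4) => by
    have ih := gs_bound j
    rw [gs, abs_div, pow_add]
    norm_num
    norm_num at ih
    linarith

lemma coeff_q_mul (ε : ℝ) (f : PS) (j : ℕ) :
    PowerSeries.coeff (j+2) (q ε * f) =
      PowerSeries.coeff (j+2) f + ε/4 * PowerSeries.coeff j f := by
  rw [q, add_mul, one_mul, map_add, mul_assoc, PowerSeries.coeff_C_mul, PowerSeries.coeff_X_pow_mul]

lemma coeff_q_mul0 (ε : ℝ) (f : PS) :
    PowerSeries.coeff 0 (q ε * f) = PowerSeries.coeff 0 f := by
  rw [q, add_mul, one_mul, map_add, mul_assoc, PowerSeries.coeff_C_mul, PowerSeries.coeff_X_pow_mul']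
  simp

lemma coeff_q_mul1 (ε : ℝ) (f : PS) :
    PowerSeries.coeff 1 (q ε * f) = PowerSeries.coeff 1 f := by
  rw [q, add_mul, one_mul, map_add, mul_assoc, PowerSeries.coeff_C_mul, PowerSeries.coeff_X_pow_mul']
  simp

open scoped PowerSeries in
lemma q_mul_dP (ε : ℝ) :
    q ε * d⁄dX ℝ (P ε) = - (PowerSeries.C (ε/4) * (PowerSeries.X * P ε)) := by
  ext j
  rcases j with _ | _ | j
  · rw [coeff_q_mul0, PowerSeries.coeff_derivative]; simp [P, ps]
  · rw [coeff_q_mul1, PowerSeries.coeff_derivative, map_neg, PowerSeries.coeff_C_mul,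
      PowerSeries.coeff_succ_X_mul]
    simp [P, ps]; ring
  · rw [coeff_q_mul, PowerSeries.coeff_derivative, map_neg, PowerSeries.coeff_C_mul,
      show j + 2 = (j+1)+1 from rfl, PowerSeries.coeff_succ_X_mul, PowerSeries.coeff_derivative]
    simp only [P, PowerSeries.coeff_mk]
    rw [show j + 1 + 1 + 1 = (j+1)+2 from rfl, ps]
    push_cast
    field_simp
    ring

open scoped PowerSeries in
lemma d_q (ε : ℝ) : d⁄dX ℝ (q ε) = PowerSeries.C (ε/4) * (2 * PowerSeries.X) := by
  rw [q, map_add, Derivation.leibniz, PowerSeries.derivative_C, Derivation.leibniz_pow]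
  simp [mul_comm]

open scoped PowerSeries in
lemma q_P_P (ε : ℝ) : q ε * P ε * P ε = 1 := by
  apply PowerSeries.derivative.ext
  · rw [Derivation.leibniz, Derivation.leibniz, d_q]
    simp only [smul_eq_mul, Derivation.map_one_eq_zero]
    have := q_mul_dP ε
    linear_combination (2 * P ε) * this
  · simp [q, P, ps]

lemma A_P (ε : ℝ) : Aa ε * P ε = 1 := q_P_P ε
lemma A_A (ε : ℝ) : Aa ε * Aa ε = q ε := by
  have := q_P_P ε
  unfold Aa
  linear_combination (q ε) * this

lemma coeff_A_succ (ε : ℝ) (j : ℕ) : PowerSeries.coeff (j+2) (Aa ε) = ε * ps ε j / (4 * ((j:ℝ)+2)) := by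
  rw [Aa, coeff_q_mul]
  simp only [P, PowerSeries.coeff_mk, ps]
  field_simp
  ring

lemma coeff_A_zero (ε : ℝ) : PowerSeries.coeff 0 (Aa ε) = 1 := by
  rw [Aa, coeff_q_mul0]; simp only [P, PowerSeries.coeff_mk, ps]
lemma coeff_A_one (ε : ℝ) : PowerSeries.coeff 1 (Aa ε) = 0 := by
  rw [Aa, coeff_q_mul1]; simp only [P, PowerSeries.coeff_mk, ps]

lemma coeff_A_bound' (ε : ℝ) (hε : |ε| = 1) (j : ℕ) :
    |PowerSeries.coeff (j+2) (Aa ε)| ≤ (1/2)^j / (4 * ((j:ℝ)+2)) := by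
  rw [coeff_A_succ, abs_div, abs_mul, hε, abs_of_pos (by positivity : (0:ℝ) < 4 * ((j:ℝ)+2)), one_mul]
  have := ps_bound ε hε j
  gcongr

lemma coeff_A_bound (ε : ℝ) (hε : |ε| = 1) (j : ℕ) :
    |PowerSeries.coeff j (Aa ε)| ≤ (1/2)^j := by
  rcases j with _ | _ | j
  · simp [coeff_A_zero]
  · simp [coeff_A_one]
  · refine (coeff_A_bound' ε hε j).trans ?_
    rw [show j + 1 + 1 = j + 2 from rfl, pow_add, div_le_iff₀ (by positivity)]
    have : (0:ℝ) < (1/2)^j := by positivity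
    have h2 : (0:ℝ) ≤ j := by positivity
    nlinarith [mul_nonneg this.le h2]

/-- `(a+b)/2 - 1` -/
def ee : PS := PowerSeries.C (1/2) * (Aa 1 + Aa (-1))

lemma coeff_ee (j : ℕ) : PowerSeries.coeff j ee =
    1/2 * (PowerSeries.coeff j (Aa 1) + PowerSeries.coeff j (Aa (-1))) := by
  rw [ee, PowerSeries.coeff_C_mul, map_add]

lemma ee_eq : ∃ f : PS, ee = 1 + PowerSeries.X ^ 4 * f ∧
    ∀ j, |PowerSeries.coeff j f| ≤ 1/64 * (1/2)^j := by
  refine ⟨PowerSeries.mk fun j => PowerSeries.coeff (j+4) ee, ?_, ?_⟩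
  · ext j
    rw [map_add, PowerSeries.coeff_X_pow_mul', PowerSeries.coeff_mk]
    rcases j with _ | _ | _ | _ | j
    · simp only [coeff_ee, coeff_A_zero]; norm_num
    · rw [coeff_ee, zero_add, coeff_A_one, coeff_A_one]; simp [PowerSeries.coeff_one]
    · simp only [coeff_ee, coeff_A_succ]; norm_num [ps, PowerSeries.coeff_one]
    · simp only [coeff_ee, coeff_A_succ]; simp [ps]
    · rw [if_pos (by omega), PowerSeries.coeff_one, if_neg (by omega)]
      simp
  · intro j
    rw [PowerSeries.coeff_mk, coeff_ee, abs_mul]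
    have h1 := coeff_A_bound' 1 (by simp) (j+2)
    have h2 := coeff_A_bound' (-1) (by simp) (j+2)
    have h3 := abs_add_le (PowerSeries.coeff (j+4) (Aa 1)) (PowerSeries.coeff (j+4) (Aa (-1)))
    have h4 : ((1:ℝ)/2)^(j+2) / (4 * (((j+2:ℕ):ℝ)+2)) ≤ 1/64 * (1/2)^j := by
      rw [div_le_iff₀ (by positivity), pow_add]
      have : (0:ℝ) < (1/2)^j := by positivity
      have h2 : (0:ℝ) ≤ j := by positivity
      push_cast
      nlinarith [mul_nonneg this.le h2]
    rw [show |(1:ℝ)/2| = 1/2 by norm_num]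
    linarith

lemma gg_eq : (1 - PowerSeries.C (1/16) * PowerSeries.X ^ 4) * gg = 1 := by
  ext j
  rw [sub_mul, one_mul, map_sub, mul_assoc, PowerSeries.coeff_C_mul, PowerSeries.coeff_X_pow_mul']
  rcases j with _ | _ | _ | _ | j
  · simp [gg, gs]
  · simp [gg, gs]
  · simp [gg, gs, PowerSeries.coeff_one]
  · simp [gg, gs, PowerSeries.coeff_one]
  · rw [if_pos (by omega), PowerSeries.coeff_one, if_neg (by omega)]
    simp [gg, gs]; ring

/-- the logarithmic derivative of `hh` times `X` -/
def dl : PS := PowerSeries.X ^ 4 * (PowerSeries.C (1/8) * gg)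

lemma C_eq (x : ℝ) (n : ℕ) (h : x * n = 1) : PowerSeries.C x * (n : PS) = 1 := by
  have : (n : PS) = PowerSeries.C (n:ℝ) := by simp
  rw [this, ← map_mul, h, map_one]

lemma gg_sq : gg = hh * hh := by
  have h1 := q_P_P 1
  have h2 := q_P_P (-1)
  have h3 := gg_eq
  have h4 : (1 - PowerSeries.C (1/16) * PowerSeries.X ^ 4 : PS) = q 1 * q (-1) := by
    have e1 : PowerSeries.C (-1/4:ℝ) = - PowerSeries.C (1/4:ℝ) := by rw [← map_neg]; norm_num
    have e2 : PowerSeries.C (1/16:ℝ) = PowerSeries.C (1/4:ℝ) * PowerSeries.C (1/4:ℝ) := by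
      rw [← map_mul]; norm_num
    rw [q, q, e1, e2]; ring
  rw [h4] at h3
  unfold hh
  linear_combination (P 1 * P (-1))^2 * h3 - gg * h1 * (q (-1) * P (-1) * P (-1)) - gg * h2

open scoped PowerSeries in
lemma X_dh : PowerSeries.X * d⁄dX ℝ hh = dl * hh := by
  have h1 := q_P_P 1
  have h2 := q_P_P (-1)
  have d1 := q_mul_dP 1
  have d2 := q_mul_dP (-1)
  have e1 : PowerSeries.C (-1/4:ℝ) = - PowerSeries.C (1/4:ℝ) := by rw [← map_neg]; norm_num
  have e2 : PowerSeries.C (1/8:ℝ) = 2 * PowerSeries.C (1/4:ℝ) * PowerSeries.C (1/4:ℝ) := by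
    have : (2:PS) = PowerSeries.C 2 := (map_ofNat PowerSeries.C 2).symm
    rw [this, ← map_mul, ← map_mul]; norm_num
  have D1 : d⁄dX ℝ (P 1) = - (PowerSeries.C (1/4:ℝ) * (PowerSeries.X * P 1)) * (P 1 * P 1) := by
    linear_combination (P 1 * P 1) * d1 - (d⁄dX ℝ (P 1)) * h1
  have D2 : d⁄dX ℝ (P (-1)) = (PowerSeries.C (1/4:ℝ) * (PowerSeries.X * P (-1))) * (P (-1) * P (-1)) := by
    rw [e1] at d2
    linear_combination (P (-1) * P (-1)) * d2 - (d⁄dX ℝ (P (-1))) * h2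
  rw [dl, gg_sq, hh, Derivation.leibniz, D1, D2, e2]
  simp only [smul_eq_mul]
  rw [q] at h1 h2
  rw [e1] at h2
  linear_combination (PowerSeries.C (1/4:ℝ) * PowerSeries.X^2 * P 1 * P (-1)) * ((P 1)^2 * h2 - (P (-1))^2*h1)

open scoped PowerSeries in
lemma dA (ε : ℝ) : d⁄dX ℝ (Aa ε) = PowerSeries.C (ε/4) * (PowerSeries.X * P ε) := by
  have d := q_mul_dP ε
  rw [Aa, Derivation.leibniz, d_q]
  simp only [smul_eq_mul]
  linear_combination d

abbrev BF := LinearMap.BilinForm ℝ PS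

def tw (β : BF) (u : PS) : BF := β.compl₁₂ (LinearMap.mulLeft ℝ u) (LinearMap.mulLeft ℝ u)

lemma tw_apply (β : BF) (u f g : PS) : tw β u f g = β (u * f) (u * g) := rfl

def G (β : BF) : BF := (1/4:ℝ) • tw β (PowerSeries.X ^ 2) +
  (1/2:ℝ) • tw β (PowerSeries.X * Aa 1) + (1/2:ℝ) • tw β (PowerSeries.X * Aa (-1))

lemma G_apply (β : BF) (f g : PS) : G β f g =
    1/4 * β (PowerSeries.X ^ 2 * f) (PowerSeries.X ^ 2 * g) +
    1/2 * β (PowerSeries.X * Aa 1 * f) (PowerSeries.X * Aa 1 * g) +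
    1/2 * β (PowerSeries.X * Aa (-1) * f) (PowerSeries.X * Aa (-1) * g) := rfl

lemma G_add (β γ : BF) : G (β + γ) = G β + G γ := by
  ext f g
  simp only [G_apply, LinearMap.add_apply]
  ring

lemma G_iter_add (m : ℕ) (β γ : BF) : G^[m] (β + γ) = G^[m] β + G^[m] γ := by
  induction m generalizing β γ with
  | zero => rfl
  | succ m ih => rw [Function.iterate_succ_apply, G_add, ih]; rfl

def B0 (k : ℕ) : BF := LinearMap.mk₂ ℝ
  (fun f g => PowerSeries.coeff k (f * hh) * PowerSeries.coeff k (g * hh))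
  (by intros; simp [add_mul]) (by intros; simp [mul_assoc])
  (by intros; simp [add_mul, mul_add]) (by intros; simp [mul_left_comm])

lemma B0_apply (k : ℕ) (f g : PS) :
    B0 k f g = PowerSeries.coeff k (f * hh) * PowerSeries.coeff k (g * hh) := rfl

def Bn (k : ℕ) : ℕ → BF
  | 0 => B0 k
  | (n+1) => Bn k n + G (Bn k n)

def Dm (k m n : ℕ) : BF := G^[m] (Bn k n)

lemma Dm_succ (k m n : ℕ) : Dm k m (n+1) = Dm k m n + Dm k (m+1) n := by
  unfold Dm
  rw [Bn, G_iter_add, Function.iterate_succ_apply]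

def Psd (β : BF) : Prop := (∀ f, 0 ≤ β f f) ∧ ∀ f g, β f g = β g f

lemma Psd.add {β γ : BF} (h : Psd β) (h' : Psd γ) : Psd (β + γ) :=
  ⟨fun f => add_nonneg (h.1 f) (h'.1 f), fun f g => by
    simp only [LinearMap.add_apply]; rw [h.2, h'.2]⟩

lemma Psd.G {β : BF} (h : Psd β) : Psd (G β) := by
  refine ⟨fun f => ?_, fun f g => ?_⟩
  · rw [G_apply]
    have h1 := h.1 (PowerSeries.X ^ 2 * f)
    have h2 := h.1 (PowerSeries.X * Aa 1 * f)
    have h3 := h.1 (PowerSeries.X * Aa (-1) * f)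
    positivity
  · simp only [G_apply]
    rw [h.2, h.2 (PowerSeries.X * Aa 1 * f), h.2 (PowerSeries.X * Aa (-1) * f)]

lemma Psd_B0 (k : ℕ) : Psd (B0 k) :=
  ⟨fun f => by rw [B0_apply]; exact mul_self_nonneg _, fun f g => by simp only [B0_apply]; ring⟩

lemma Psd_Bn (k n : ℕ) : Psd (Bn k n) := by
  induction n with
  | zero => exact Psd_B0 k
  | succ n ih => exact ih.add ih.G

lemma Psd_Dm (k m n : ℕ) : Psd (Dm k m n) := by
  induction m with
  | zero => exact Psd_Bn k n
  | succ m ih => unfold Dm; rw [Function.iterate_succ_apply']; exact ih.G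

def Van (β : BF) (d : ℕ) : Prop := ∀ f g, β (PowerSeries.X ^ d * f) g = 0

lemma Van.G {β : BF} {d : ℕ} (h : Van β d) : Van (G β) (d-1) := by
  intro f g
  rw [G_apply]
  have key : ∀ u v : PS, β (PowerSeries.X * u * (PowerSeries.X ^ (d-1) * f)) v = 0 := by
    intro u v
    rcases d with _ | d
    · have := h (PowerSeries.X * u * (PowerSeries.X ^ (0-1) * f)) v
      simpa using this
    · have := h (u * f) v
      rw [← this]; congr 2
      simp only [Nat.add_sub_cancel]; ring
  rw [key, key, show (PowerSeries.X ^ 2 : PS) = PowerSeries.X * PowerSeries.X by ring, key]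
  ring

lemma Van.mono {β : BF} {d e : ℕ} (h : Van β d) (hde : d ≤ e) : Van β e := by
  intro f g
  obtain ⟨c, rfl⟩ := Nat.exists_eq_add_of_le hde
  rw [pow_add, mul_assoc]; exact h _ _

lemma Van_Bn (k n : ℕ) : Van (Bn k n) (k+1) := by
  induction n with
  | zero =>
    intro f g
    rw [Bn, B0_apply, mul_assoc, PowerSeries.coeff_X_pow_mul', if_neg (by omega), zero_mul]
  | succ n ih =>
    intro f g
    rw [Bn, LinearMap.add_apply, LinearMap.add_apply, ih, (ih.G).mono (by omega), add_zero]

lemma Van_Dm (k m n : ℕ) : Van (Dm k m n) (k+1-m) := by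
  induction m with
  | zero => exact Van_Bn k n
  | succ m ih =>
    unfold Dm; rw [Function.iterate_succ_apply', ← Nat.sub_sub]; exact ih.G

lemma Dm_zero (k m n : ℕ) (h : k < m) (f g : PS) : Dm k m n f g = 0 := by
  have := Van_Dm k m n f g
  rw [show k + 1 - m = 0 by omega] at this
  simpa using this

lemma newton (k i n : ℕ) (f g : PS) : Dm k i n f g =
    ∑ m ∈ Finset.range (n+1), (n.choose m : ℝ) * Dm k (i+m) 0 f g := by
  induction n generalizing i with
  | zero => simp
  | succ n ih =>
    rw [Dm_succ, LinearMap.add_apply, LinearMap.add_apply, ih, ih, Finset.sum_range_succ' _ (n+1),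
      Finset.sum_range_succ' _ n]
    have : ∀ m, ((n+1).choose (m+1) : ℝ) * Dm k (i+(m+1)) 0 f g
        = (n.choose m : ℝ) * Dm k (i+1+m) 0 f g + (n.choose (m+1) : ℝ) * Dm k (i+(m+1)) 0 f g := by
      intro m
      rw [Nat.choose_succ_succ, show i + 1 + m = i + (m+1) by ring]; push_cast; ring
    simp only [this, Finset.sum_add_distrib]
    rw [Finset.sum_range_succ (fun m => (n.choose (m+1) : ℝ) * Dm k (i+(m+1)) 0 f g) n]
    simp
    ring

lemma fwd_iter (k m n : ℕ) (f g : PS) :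
    fwd^[m] (fun n => Bn k n f g) n = Dm k m n f g := by
  induction m generalizing n with
  | zero => rfl
  | succ m ih =>
    rw [Function.iterate_succ_apply', fwd, ih, ih, Dm_succ]
    simp

lemma mean_formula (k n : ℕ) (f g : PS) : ((n:ℝ)+1) * Dm k 1 n f g =
    ∑ m ∈ Finset.range (n+2), (m:ℝ) * (((n+1).choose m : ℝ) * Dm k m 0 f g) := by
  rw [newton, Finset.sum_range_succ' _ (n+1), Finset.mul_sum]
  simp only [Nat.cast_zero, zero_mul, add_zero]
  refine Finset.sum_congr rfl fun m _ => ?_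
  have h : ((n:ℝ)+1) * n.choose m = (n+1).choose (m+1) * ((m:ℝ)+1) := by
    exact_mod_cast Nat.add_one_mul_choose_eq n m
  rw [add_comm 1 m]; push_cast
  linear_combination (Dm k (m+1) 0 f g) * h

lemma Bn_eq_Dm (k n : ℕ) : Bn k n = Dm k 0 n := rfl

lemma mean_le (k n : ℕ) (f : PS) : ((n:ℝ)+1) * Dm k 1 n f f ≤ k * Bn k (n+1) f f := by
  rw [mean_formula, Bn_eq_Dm, newton, Finset.mul_sum]
  refine Finset.sum_le_sum fun m _ => ?_
  rw [zero_add]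
  by_cases h : m ≤ k
  · have h1 := (Psd_Dm k m 0).1 f
    have : (m:ℝ) ≤ k := by exact_mod_cast h
    gcongr
  · rw [Dm_zero k m 0 (by omega)]; simp

lemma D1_le (k n : ℕ) (hk : 0 < k) (hn : 2 * k ≤ n) (f : PS) :
    Dm k 1 n f f ≤ 2 * (k/n) * Bn k n f f := by
  have h := mean_le k n f
  have e : Bn k (n+1) f f = Bn k n f f + Dm k 1 n f f := by
    rw [Bn_eq_Dm, Dm_succ]; rfl
  rw [e] at h
  have h1 := (Psd_Dm k 1 n).1 f
  have h2 : (2:ℝ) * k ≤ n := by exact_mod_cast hn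
  have h3 : (0:ℝ) < k := by exact_mod_cast hk
  have h4 : (0:ℝ) < n := by linarith
  rw [← mul_div_assoc, div_mul_eq_mul_div, le_div_iff₀ h4]
  nlinarith

/-! seminorm -/
def nm (β : BF) (f : PS) : ℝ := Real.sqrt (β f f)

lemma nm_nonneg (β : BF) (f : PS) : 0 ≤ nm β f := Real.sqrt_nonneg _

lemma nm_sq {β : BF} (h : Psd β) (f : PS) : nm β f ^ 2 = β f f := Real.sq_sqrt (h.1 f)

lemma cs {β : BF} (h : Psd β) (f g : PS) : β f g ≤ nm β f * nm β g := by
  unfold nm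
  rw [← Real.sqrt_mul (h.1 f)]
  apply Real.le_sqrt_of_sq_le
  have hq : ∀ x : ℝ, 0 ≤ β f f * (x * x) + (2 * β f g) * x + β g g := by
    intro x
    have := h.1 (x • f + g)
    simp only [map_add, map_smul, LinearMap.add_apply, LinearMap.smul_apply, smul_eq_mul] at this
    rw [h.2 g f] at this
    linarith
  have := discrim_le_zero hq
  rw [discrim] at this
  nlinarith

lemma nm_add {β : BF} (h : Psd β) (f g : PS) : nm β (f + g) ≤ nm β f + nm β g := by
  apply le_of_sq_le_sq _ (add_nonneg (nm_nonneg _ _) (nm_nonneg _ _))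
  rw [nm_sq h]
  simp only [map_add, LinearMap.add_apply]
  rw [h.2 g f, add_sq, nm_sq h, nm_sq h]
  linarith [cs h f g]

lemma nm_smul {β : BF} (c : ℝ) (f : PS) : nm β (c • f) = |c| * nm β f := by
  unfold nm
  simp only [map_smul, LinearMap.smul_apply, smul_eq_mul]
  rw [← mul_assoc, Real.sqrt_mul (mul_self_nonneg c), Real.sqrt_mul_self_eq_abs]

lemma nm_sum {β : BF} (h : Psd β) (s : Finset ℕ) (F : ℕ → PS) :
    nm β (∑ j ∈ s, F j) ≤ ∑ j ∈ s, nm β (F j) := by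
  induction s using Finset.induction_on with
  | empty => simp [nm]
  | insert i s hi ih =>
    rw [Finset.sum_insert hi, Finset.sum_insert hi]
    exact (nm_add h _ _).trans (by linarith)

lemma nm_van {β : BF} {d : ℕ} (hv : Van β d) (f : PS) : nm β (PowerSeries.X ^ d * f) = 0 := by
  rw [nm, hv, Real.sqrt_zero]

lemma nm_series {β : BF} (h : Psd β) {d : ℕ} (hv : Van β d) (i : ℕ) (f : PS) :
    nm β (PowerSeries.X ^ i * f) ≤
      ∑ j ∈ Finset.range d, |PowerSeries.coeff j f| * nm β (PowerSeries.X ^ (i+j)) := by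
  have e : f = (∑ j ∈ Finset.range d, PowerSeries.coeff j f • PowerSeries.X ^ j) +
      PowerSeries.X ^ d * (PowerSeries.mk fun j => PowerSeries.coeff (j+d) f) := by
    ext j
    rw [map_add, map_sum, PowerSeries.coeff_X_pow_mul']
    simp only [PowerSeries.coeff_smul, PowerSeries.coeff_X_pow, PowerSeries.coeff_mk, smul_eq_mul,
      mul_ite, mul_one, mul_zero, Finset.sum_ite_eq, Finset.mem_range]
    by_cases hj : j < d
    · rw [if_pos hj, if_neg (by omega), add_zero]
    · rw [if_neg hj, if_pos (by omega), zero_add, Nat.sub_add_cancel (by omega)]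
  have e2 : PowerSeries.X ^ i * f =
      (∑ j ∈ Finset.range d, PowerSeries.coeff j f • (PowerSeries.X ^ (i+j) : PS)) +
      PowerSeries.X ^ d * (PowerSeries.X ^ i * (PowerSeries.mk fun j => PowerSeries.coeff (j+d) f)) := by
    conv_lhs => rw [e]
    rw [mul_add, Finset.mul_sum]
    congr 1
    · refine Finset.sum_congr rfl fun j _ => ?_
      rw [mul_smul_comm, pow_add]
    · ring
  rw [e2]
  refine (nm_add h _ _).trans ?_
  rw [nm_van hv, add_zero]
  refine (nm_sum h _ _).trans (le_of_eq ?_)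
  exact Finset.sum_congr rfl fun j _ => nm_smul _ _

lemma geom_bound (d : ℕ) : ∑ j ∈ Finset.range d, ((5:ℝ)/7)^j ≤ 7/2 := by
  have h := geom_sum_eq (show (5:ℝ)/7 ≠ 1 by norm_num) d
  rw [h]
  have : (0:ℝ) ≤ (5/7)^d := by positivity
  rw [div_le_iff_of_neg (by norm_num)]
  linarith

lemma nm_series' {β : BF} (h : Psd β) {d : ℕ} (hv : Van β d) (i : ℕ) (f : PS) (M : ℝ) (hM : 0 ≤ M)
    (hf : ∀ j, |PowerSeries.coeff j f| ≤ M * (1/2)^j)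
    (hr : ∀ i', i ≤ i' → nm β (PowerSeries.X ^ (i'+1)) ≤ 10/7 * nm β (PowerSeries.X ^ i')) :
    nm β (PowerSeries.X ^ i * f) ≤ M * (7/2) * nm β (PowerSeries.X ^ i) := by
  have hp : ∀ j, nm β (PowerSeries.X ^ (i+j)) ≤ (10/7)^j * nm β (PowerSeries.X ^ i) := by
    intro j
    induction j with
    | zero => simp
    | succ j ih =>
      have := hr (i+j) (by omega)
      rw [← add_assoc, pow_succ (10/7:ℝ)]; linarith
  calc _ ≤ _ := nm_series h hv i f
    _ ≤ ∑ j ∈ Finset.range d, (M * nm β (PowerSeries.X ^ i)) * (5/7)^j := by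
      refine Finset.sum_le_sum fun j _ => ?_
      calc _ ≤ (M * (1/2)^j) * ((10/7)^j * nm β (PowerSeries.X ^ i)) :=
            mul_le_mul (hf j) (hp j) (nm_nonneg _ _) (by positivity)
        _ = _ := by
          rw [show (5:ℝ)/7 = 1/2 * (10/7) by norm_num, mul_pow]; ring
    _ ≤ _ := by
      rw [← Finset.mul_sum]
      have := geom_bound d
      have h0 := mul_nonneg hM (nm_nonneg β (PowerSeries.X ^ i))
      nlinarith

/-- Key ratio estimate. -/
lemma ratio (k n : ℕ) (hk : 0 < k) (hn : 2 * k ≤ n) (i : ℕ) :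
    nm (Bn k n) (PowerSeries.X ^ (i+1)) ≤ 2 * Real.sqrt (k/n) * nm (Bn k n) (PowerSeries.X ^ i) := by
  have hP := Psd_Bn k n
  have hV := Van_Bn k n
  have h2 : (2:ℝ) * k ≤ n := by exact_mod_cast hn
  have h3 : (0:ℝ) < k := by exact_mod_cast hk
  have h4 : (0:ℝ) < n := by linarith
  have hx : (k:ℝ)/n ≤ 1/2 := by rw [div_le_iff₀ h4]; linarith
  have hx0 : (0:ℝ) ≤ k/n := by positivity
  have hs : 2 * Real.sqrt (k/n) ≤ 10/7 := by
    have : Real.sqrt (k/n) ≤ 5/7 := by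
      rw [Real.sqrt_le_left (by norm_num)]; norm_num; linarith
    linarith
  -- downward induction
  suffices H : ∀ d i, k + 1 ≤ i + d → nm (Bn k n) (PowerSeries.X ^ (i+1)) ≤
      2 * Real.sqrt (k/n) * nm (Bn k n) (PowerSeries.X ^ i) from H (k+1) i (by omega)
  intro d
  induction d with
  | zero =>
    intro i hi
    have := nm_van (hV.mono (show k + 1 ≤ i+1 by omega)) 1
    rw [mul_one] at this
    rw [this]
    have := nm_nonneg (Bn k n) (PowerSeries.X ^ i)
    positivity
  | succ d ih =>
    intro i hi
    have hr : ∀ i', i + 1 ≤ i' → nm (Bn k n) (PowerSeries.X ^ (i'+1)) ≤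
        10/7 * nm (Bn k n) (PowerSeries.X ^ i') := fun i' hi' =>
      (ih i' (by omega)).trans (mul_le_mul_of_nonneg_right hs (nm_nonneg _ _))
    obtain ⟨f, hef, hf⟩ := ee_eq
    have t1 := nm_series' hP hV (i+5) f (1/64) (by norm_num) hf
      (fun i' hi' => hr i' (by omega))
    have r1 := hr (i+1) (by omega)
    have r2 := hr (i+2) (by omega)
    have r3 := hr (i+3) (by omega)
    have r4 := hr (i+4) (by omega)
    simp only [add_assoc, Nat.reduceAdd] at r1 r2 r3 r4
    have hle : nm (Bn k n) (PowerSeries.X ^ (i+5)* f) ≤ 1/4 * nm (Bn k n) (PowerSeries.X ^ (i+1)) := by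
      have := nm_nonneg (Bn k n) (PowerSeries.X ^ (i+1))
      linarith
    -- X^(i+1) = X^(i+1)*ee - X^(i+5)*f
    have e1 : (PowerSeries.X ^ (i+1) : PS) = PowerSeries.X ^ (i+1) * ee + (-1:ℝ) • (PowerSeries.X ^ (i+5) * f) := by
      rw [hef, neg_one_smul]; ring
    have t2 : nm (Bn k n) (PowerSeries.X ^ (i+1)) ≤ nm (Bn k n) (PowerSeries.X ^ (i+1) * ee) +
        nm (Bn k n) (PowerSeries.X ^ (i+5) * f) := by
      conv_lhs => rw [e1]
      refine (nm_add hP _ _).trans ?_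
      rw [nm_smul]; simp
    -- Jensen
    have t3 : nm (Bn k n) (PowerSeries.X ^ (i+1) * ee) ^ 2 ≤ 2 * (k/n) * nm (Bn k n) (PowerSeries.X ^ i) ^ 2 := by
      rw [nm_sq hP, nm_sq hP]
      refine le_trans ?_ (D1_le k n hk hn _)
      rw [Dm, Function.iterate_one, G_apply]
      set u : PS := PowerSeries.X * Aa 1 * PowerSeries.X ^ i
      set v : PS := PowerSeries.X * Aa (-1) * PowerSeries.X ^ i
      have e2 : (PowerSeries.X ^ (i+1) * ee : PS) = (1/2:ℝ) • (u + v) := by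
        rw [ee, PowerSeries.smul_eq_C_mul]; simp only [u, v]; ring
      have p1 := hP.1 (PowerSeries.X ^ 2 * PowerSeries.X ^ i)
      have p2 := hP.1 (u - v)
      rw [e2]
      simp only [map_add, map_sub, map_smul, LinearMap.add_apply, LinearMap.sub_apply,
        LinearMap.smul_apply, smul_eq_mul] at p2 ⊢
      rw [hP.2 v u] at *
      linarith
    have t4 : nm (Bn k n) (PowerSeries.X ^ (i+1)) * (3/4) ≤ nm (Bn k n) (PowerSeries.X ^ (i+1) * ee) := by linarith
    have t5 := pow_le_pow_left₀ (mul_nonneg (nm_nonneg _ _) (by norm_num)) t4 2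
    apply le_of_sq_le_sq _ (by have := nm_nonneg (Bn k n) (PowerSeries.X ^ i); positivity)
    rw [mul_pow, mul_pow, Real.sq_sqrt hx0]
    have := mul_nonneg hx0 (sq_nonneg (nm (Bn k n) (PowerSeries.X ^ i)))
    nlinarith

def th (f : PS) : PS := PowerSeries.X * PowerSeries.derivative ℝ f

lemma th_mul (f g : PS) : th (f * g) = th f * g + f * th g := by
  unfold th; rw [Derivation.leibniz]; simp only [smul_eq_mul]; ring

def Rb (β : BF) : BF :=
  (1/2:ℝ) • tw β (PowerSeries.X ^ 2) +
  (1/2:ℝ) • β.compl₁₂ (LinearMap.mulLeft ℝ (th (PowerSeries.X * Aa 1)))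
    (LinearMap.mulLeft ℝ (PowerSeries.X * Aa 1)) +
  (1/2:ℝ) • β.compl₁₂ (LinearMap.mulLeft ℝ (th (PowerSeries.X * Aa (-1))))
    (LinearMap.mulLeft ℝ (PowerSeries.X * Aa (-1)))

lemma Rb_apply (β : BF) (f g : PS) : Rb β f g =
    1/2 * β (PowerSeries.X ^ 2 * f) (PowerSeries.X ^ 2 * g) +
    1/2 * β (th (PowerSeries.X * Aa 1) * f) (PowerSeries.X * Aa 1 * g) +
    1/2 * β (th (PowerSeries.X * Aa (-1)) * f) (PowerSeries.X * Aa (-1) * g) := rfl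

lemma Rb_add (β γ : BF) : Rb (β + γ) = Rb β + Rb γ := by
  ext f g
  simp only [Rb_apply, LinearMap.add_apply]
  ring

lemma G_smul (c : ℝ) (γ : BF) : G (c • γ) = c • G γ := by
  ext f g
  simp only [G_apply, LinearMap.smul_apply, smul_eq_mul]
  ring

lemma GR (β : BF) : G (Rb β) = Rb (G β) := by
  ext f g
  simp only [G_apply, Rb_apply]
  generalize th (PowerSeries.X * Aa 1) = u1
  generalize th (PowerSeries.X * Aa (-1)) = u2
  generalize (PowerSeries.X * Aa 1 : PS) = v1
  generalize (PowerSeries.X * Aa (-1) : PS) = v2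
  generalize (PowerSeries.X ^ 2 : PS) = v
  rw [mul_left_comm v u1, mul_left_comm v u2, mul_left_comm v1 u1, mul_left_comm v1 u2,
    mul_left_comm v2 u1, mul_left_comm v2 u2, mul_left_comm v v1, mul_left_comm v v2,
    mul_left_comm v v1, mul_left_comm v v2, mul_left_comm v1 v2]
  ring

def Eul (k : ℕ) (β γ : BF) : Prop := ∀ f g, (k:ℝ) * β f g = β (th f + dl * f) g + γ f g

lemma th_X2 : th (PowerSeries.X ^ 2 : PS) = (2:ℝ) • PowerSeries.X ^ 2 := by
  unfold th
  rw [Derivation.leibniz_pow, PowerSeries.derivative_X]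
  rw [ofNat_smul_eq_nsmul ℝ 2, nsmul_eq_mul]
  simp
  ring

lemma Eul.G {k : ℕ} {β γ : BF} (h : Eul k β γ) : Eul k (G β) (Rb β + G γ) := by
  have key : ∀ u f g, (k:ℝ) * β (u * f) (u * g) =
      β (u * (th f + dl * f)) (u * g) + β (th u * f) (u * g) + γ (u * f) (u * g) := by
    intro u f g
    rw [h, th_mul, show th u * f + u * th f + dl * (u * f) = u * (th f + dl * f) + th u * f by ring,
      map_add, LinearMap.add_apply]
  intro f g
  simp only [LinearMap.add_apply, Rb_apply, G_apply]
  have k1 := key (PowerSeries.X ^ 2) f g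
  have k2 := key (PowerSeries.X * Aa 1) f g
  have k3 := key (PowerSeries.X * Aa (-1)) f g
  rw [th_X2, smul_mul_assoc, map_smul, LinearMap.smul_apply, smul_eq_mul] at k1
  linear_combination 1/4 * k1 + 1/2 * k2 + 1/2 * k3

lemma Eul.add {k : ℕ} {β γ β' γ' : BF} (h : Eul k β γ) (h' : Eul k β' γ') :
    Eul k (β + β') (γ + γ') := by
  intro f g
  simp only [LinearMap.add_apply]
  linear_combination h f g + h' f g

lemma Eul_B0 (k : ℕ) : Eul k (B0 k) 0 := by
  intro f g
  simp only [B0_apply, LinearMap.zero_apply, add_zero]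
  have e : (th f + dl * f) * hh = th (f * hh) := by
    rw [th_mul]; unfold th; rw [X_dh]; ring
  rw [e]
  have : PowerSeries.coeff k (th (f * hh)) = k * PowerSeries.coeff k (f * hh) := by
    unfold th
    rcases k with _ | k
    · simp
    · rw [PowerSeries.coeff_succ_X_mul, PowerSeries.coeff_derivative]; push_cast; ring
  rw [this]; ring

lemma G_zero : G 0 = 0 := by
  ext f g; simp [G_apply]

lemma Eul_Bn (k n : ℕ) : Eul k (Bn k (n+1)) (((n:ℝ)+1) • Rb (Bn k n)) := by
  induction n with
  | zero =>
    have := (Eul_B0 k).add (Eul_B0 k).G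
    rw [G_zero] at this
    simpa [Bn] using this
  | succ n ih =>
    have h := ih.add ih.G
    have e : ((n:ℝ)+1) • Rb (Bn k n) + (Rb (Bn k (n+1)) + G (((n:ℝ)+1) • Rb (Bn k n))) =
        (((n+1:ℕ):ℝ)+1) • Rb (Bn k (n+1)) := by
      rw [G_smul, GR]
      have : Rb (Bn k (n+1)) = Rb (Bn k n) + Rb (G (Bn k n)) := by rw [Bn, Rb_add]
      rw [this]; push_cast; module
    rw [e] at h
    exact h

lemma th_XA (ε : ℝ) : th (PowerSeries.X * Aa ε) =
    PowerSeries.X * Aa ε + (ε/4) • (PowerSeries.X ^ 3 * P ε) := by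
  rw [th, Derivation.leibniz, dA, PowerSeries.derivative_X, PowerSeries.smul_eq_C_mul]
  simp only [smul_eq_mul]; ring

lemma nm_pow (k n : ℕ) (hk : 0 < k) (hn : 2 * k ≤ n) (i : ℕ) :
    nm (Bn k n) (PowerSeries.X ^ i) ≤ (2 * Real.sqrt (k/n)) ^ i * nm (Bn k n) 1 := by
  induction i with
  | zero => simp
  | succ i ih =>
    refine (ratio k n hk hn i).trans ?_
    rw [pow_succ (2 * Real.sqrt (k/n))]
    have := mul_le_mul_of_nonneg_left ih (by positivity : 0 ≤ 2 * Real.sqrt ((k:ℝ)/n))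
    linarith

lemma nm_gen (k n : ℕ) (hk : 0 < k) (hn : 2 * k ≤ n) (i : ℕ) (f : PS)
    (hf : ∀ j, |PowerSeries.coeff j f| ≤ (1/2)^j) :
    nm (Bn k n) (PowerSeries.X ^ i * f) ≤ 4 * ((2 * Real.sqrt (k/n)) ^ i * nm (Bn k n) 1) := by
  have h2 : (2:ℝ) * k ≤ n := by exact_mod_cast hn
  have h3 : (0:ℝ) < k := by exact_mod_cast hk
  have h4 : (0:ℝ) < n := by linarith
  have hx : (k:ℝ)/n ≤ 1/2 := by rw [div_le_iff₀ h4]; linarith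
  have hs : 2 * Real.sqrt (k/n) ≤ 10/7 := by
    have : Real.sqrt (k/n) ≤ 5/7 := by
      rw [Real.sqrt_le_left (by norm_num)]; norm_num; linarith
    linarith
  have h := nm_series' (Psd_Bn k n) (Van_Bn k n) i f 1 (by norm_num) (by simpa using hf)
    (fun i' _ => (ratio k n hk hn i').trans (mul_le_mul_of_nonneg_right hs (nm_nonneg _ _)))
  have := nm_pow k n hk hn i
  have := nm_nonneg (Bn k n) (PowerSeries.X ^ i)
  linarith

set_option maxHeartbeats 2000000 in
lemma defect (k N : ℕ) (hk : 0 < k) (hN : 2 * k ≤ N) :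
    k * Bn k (N+1) 1 1 - ((N:ℝ)+1) * Dm k 1 N 1 1 ≤ 280 * (k:ℝ)^2 / ((N:ℝ)+1) * Bn k (N+1) 1 1 := by
  have h2 : (2:ℝ) * k ≤ N := by exact_mod_cast hN
  have h3 : (1:ℝ) ≤ k := by exact_mod_cast hk
  have h4 : (0:ℝ) < N := by linarith
  have hP := Psd_Bn k N
  have hP' := Psd_Bn k (N+1)
  have heul := Eul_Bn k N 1 1
  have t1 : th 1 = 0 := by unfold th; simp
  rw [t1, zero_add, mul_one, LinearMap.smul_apply, LinearMap.smul_apply, smul_eq_mul, Rb_apply] at heul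
  simp only [mul_one] at heul
  rw [th_XA, th_XA] at heul
  simp only [map_add, map_smul, LinearMap.add_apply, LinearMap.smul_apply, smul_eq_mul] at heul
  have hD : Dm k 1 N 1 1 = G (Bn k N) 1 1 := rfl
  rw [G_apply] at hD
  simp only [mul_one] at hD
  set x := 2 * Real.sqrt ((k:ℝ)/N) with hx
  set y := 2 * Real.sqrt ((k:ℝ)/((N+1 : ℕ):ℝ)) with hy
  have hx0 : 0 ≤ x := by positivity
  have hy0 : 0 ≤ y := by positivity
  have hx4 : x^4 = 16 * ((k:ℝ)/N)^2 := by
    rw [hx, mul_pow, show Real.sqrt ((k:ℝ)/N)^4 = (Real.sqrt ((k:ℝ)/N)^2)^2 by ring,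
      Real.sq_sqrt (by positivity)]; norm_num
  have hy4 : y^4 = 16 * ((k:ℝ)/((N+1:ℕ):ℝ))^2 := by
    rw [hy, mul_pow, show Real.sqrt ((k:ℝ)/((N+1:ℕ):ℝ))^4 = (Real.sqrt ((k:ℝ)/((N+1:ℕ):ℝ))^2)^2 by ring,
      Real.sq_sqrt (by positivity)]; norm_num
  set b := nm (Bn k N) 1 with hb
  set b' := nm (Bn k (N+1)) 1 with hb'
  have hb0 : 0 ≤ b := nm_nonneg _ _
  have hb0' : 0 ≤ b' := nm_nonneg _ _
  have bsq : b^2 = Bn k N 1 1 := nm_sq hP 1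
  have bsq' : b'^2 = Bn k (N+1) 1 1 := nm_sq hP' 1
  have hbb : b^2 ≤ b'^2 := by
    rw [bsq, bsq', Bn, LinearMap.add_apply, LinearMap.add_apply]
    linarith [(hP.G).1 1]
  -- the individual bounds
  have e0 : Bn k (N+1) dl 1 ≤ 1/2 * y^4 * b'^2 := by
    refine (cs hP' _ _).trans ?_
    have e : dl = (1/8:ℝ) • (PowerSeries.X^4 * gg) := by
      rw [dl, PowerSeries.smul_eq_C_mul]; ring
    have := nm_gen k (N+1) hk (by omega) 4 gg (by intro j; rw [gg, PowerSeries.coeff_mk]; exact gs_bound j)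
    rw [e, nm_smul, show |(1:ℝ)/8| = 1/8 by norm_num]
    nlinarith
  have e1 : Bn k N (PowerSeries.X^2) (PowerSeries.X^2) ≤ x^4 * b^2 := by
    refine (cs hP _ _).trans ?_
    have := nm_pow k N hk hN 2
    have h0 := nm_nonneg (Bn k N) (PowerSeries.X^2)
    calc _ ≤ (x^2 * b) * (x^2*b) := mul_le_mul this this h0 (by positivity)
      _ = _ := by ring
  have e2 : ∀ ε : ℝ, |ε| = 1 → (ε/4) * Bn k N (PowerSeries.X^3 * P ε) (PowerSeries.X * Aa ε) ≤ 4 * (x^4 * b^2) := by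
    intro ε hε
    have := cs hP ((ε/4) • (PowerSeries.X^3 * P ε)) (PowerSeries.X * Aa ε)
    rw [map_smul, LinearMap.smul_apply, smul_eq_mul, nm_smul, abs_div, hε] at this
    refine this.trans ?_
    have f1 := nm_gen k N hk hN 3 (P ε) (by intro j; rw [P, PowerSeries.coeff_mk]; exact ps_bound ε hε j)
    have f2 := nm_gen k N hk hN 1 (Aa ε) (coeff_A_bound ε hε)
    rw [pow_one, pow_one] at f2
    have g1 := nm_nonneg (Bn k N) (PowerSeries.X^3 * P ε)
    have g2 := nm_nonneg (Bn k N) (PowerSeries.X * Aa ε)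
    have := mul_le_mul f1 f2 g2 (by positivity)
    rw [show |(4:ℝ)| = 4 by norm_num]
    calc _ = 1/4 * (nm (Bn k N) (PowerSeries.X^3 * P ε) * nm (Bn k N) (PowerSeries.X * Aa ε)) := by ring
      _ ≤ 1/4 * (4 * (x^3 * b) * (4 * (x * b))) := by linarith
      _ = _ := by ring
  have e3 := e2 1 (by simp)
  have e4 := e2 (-1) (by simp)
  have main : k * Bn k (N+1) 1 1 - ((N:ℝ)+1) * Dm k 1 N 1 1 ≤
      1/2 * y^4 * b'^2 + ((N:ℝ)+1) * (17/4 * (x^4 * b^2)) := by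
    rw [heul, hD]
    have hn1 : (0:ℝ) ≤ (N:ℝ)+1 := by linarith
    have : 1/4 * Bn k N (PowerSeries.X^2) (PowerSeries.X^2) +
      1/2 * ((1/4) * Bn k N (PowerSeries.X^3 * P 1) (PowerSeries.X * Aa 1)) +
      1/2 * ((-1/4) * Bn k N (PowerSeries.X^3 * P (-1)) (PowerSeries.X * Aa (-1))) ≤ 17/4 * (x^4 * b^2) := by
      linarith
    have := mul_le_mul_of_nonneg_left this hn1
    linarith
  refine main.trans ?_
  rw [← bsq']
  have hxb : x^4 * b^2 ≤ 64 * k^2 / ((N:ℝ)+1)^2 * b'^2 := by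
    have : x^4 ≤ 64 * k^2 / ((N:ℝ)+1)^2 := by
      rw [hx4, div_pow, ← mul_div_assoc, div_le_div_iff₀ (by positivity) (by positivity)]
      have : ((N:ℝ)+1)^2 ≤ 4 * N^2 := by nlinarith
      nlinarith [mul_le_mul_of_nonneg_left this (sq_nonneg (k:ℝ))]
    exact mul_le_mul this hbb (by positivity) (by positivity)
  have hyb : y^4 ≤ 16 * k^2/ ((N:ℝ)+1) := by
    rw [hy4, div_pow, ← mul_div_assoc]; push_cast
    apply div_le_div_of_nonneg_left (by positivity) (by positivity)
    nlinarith
  have hyb' := mul_le_mul_of_nonneg_right hyb (sq_nonneg b')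
  have hxb' := mul_le_mul_of_nonneg_left hxb (by positivity : 0 ≤ ((N:ℝ)+1) * (17/4))
  have fin : ((N:ℝ)+1) * (17/4) * (64 * k^2 / ((N:ℝ)+1)^2 * b'^2) = 272 * k^2/((N:ℝ)+1) * b'^2 := by
    field_simp; ring
  rw [fin] at hxb'
  have fin2 : 280 * (k:ℝ)^2/((N:ℝ)+1) * b'^2 = 272 * k^2/((N:ℝ)+1) * b'^2 + 1/2 * (16 * k^2/ ((N:ℝ)+1) * b'^2) := by
    ring
  rw [fin2]
  linarith

lemma gbinom_pascal (y : ℝ) (k : ℕ) : gbinom (y+1) (k+1) - gbinom y (k+1) = gbinom y k := by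
  unfold gbinom
  rw [Finset.prod_range_succ', Finset.prod_range_succ, Nat.factorial_succ]
  have : ∀ j : ℕ, y + 1 - ((j+1:ℕ):ℝ) = y - j := by intro j; push_cast; ring
  simp only [this]
  have h : (k.factorial : ℝ) ≠ 0 := by positivity
  push_cast
  field_simp
  ring

lemma F_diff (k : ℕ) (x : ℝ) : F (k+1) (x+1/2) - F (k+1) (x-1/2) = F k x := by
  unfold F
  have := gbinom_pascal (x + ((k:ℝ)-1)/2) k
  rw [← this]
  congr 2 <;> (push_cast; ring)

lemma F_zero (x : ℝ) : F 0 x = 1 := by simp [F, gbinom]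
lemma F_one (x : ℝ) : F 1 x = x := by simp [F, gbinom]

lemma F_rec (j : ℕ) (x : ℝ) : F (j+2) x =
    F j x * (x^2 - (((j:ℝ)+1)/2)^2) / (((j:ℝ)+1) * ((j:ℝ)+2)) := by
  unfold F gbinom
  rw [Finset.prod_range_succ', Finset.prod_range_succ, Nat.factorial_succ, Nat.factorial_succ]
  have : ∀ i : ℕ, x + (((j+2:ℕ):ℝ) - 1)/2 - ((i+1:ℕ):ℝ) = x + ((j:ℝ)-1)/2 - i := by
    intro i; push_cast; ring
  simp only [this]
  have h : (j.factorial : ℝ) ≠ 0 := by positivity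
  push_cast
  field_simp
  ring

lemma F_at_zero : ∀ j, F j 0 = ps 1 j
  | 0 => by simp [F_zero, ps]
  | 1 => by simp [F_one, ps]
  | (j+2) => by
    rw [F_rec, F_at_zero j, ps]; field_simp; ring

lemma F_half : ∀ j, F (j+1) (1/2) + F (j+1) (-1/2) = 0
  | 0 => by simp only [zero_add, F_one]; norm_num
  | 1 => by rw [show 1 + 1 = 0 + 2 from rfl, F_rec, F_rec]; norm_num
  | (j+2) => by
    have ih := F_half j
    rw [show j + 2 + 1 = (j+1)+2 from rfl, F_rec, F_rec,
      show ((-1/2:ℝ))^2 = (1/2)^2 by norm_num, ← add_div, ← add_mul, ih]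
    simp

def Phi (x : ℝ) : PS := PowerSeries.mk fun j => F j x

lemma Phi_diff (x : ℝ) : Phi (x+1/2) - Phi (x-1/2) = PowerSeries.X * Phi x := by
  ext j
  rcases j with _ | j
  · simp [Phi, F_zero]
  · rw [PowerSeries.coeff_succ_X_mul]; simp only [Phi, map_sub, PowerSeries.coeff_mk, F_diff]

lemma Phi_zero : Phi 0 = P 1 := by
  ext j; simp [Phi, P, F_at_zero]

lemma Phi_half : Phi (1/2) + Phi (-1/2) = 2 := by
  ext j
  rw [show (2:PS) = PowerSeries.C 2 from (map_ofNat PowerSeries.C 2).symm]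
  rcases j with _ | j
  · simp [Phi, F_zero]; norm_num
  · simp only [Phi, map_add, PowerSeries.coeff_mk, F_half]
    rw [PowerSeries.coeff_C, if_neg (by omega)]

def PhiP (x : ℝ) : Prop := Phi (x+1/2) + Phi (x-1/2) = 2 * Aa 1 * Phi x

lemma C_four : 4 * PowerSeries.C (1/4:ℝ) = 1 := by
  rw [show (4:PS) = PowerSeries.C 4 from (map_ofNat PowerSeries.C 4).symm, ← map_mul]; norm_num

lemma C_two : 2 * PowerSeries.C (1/2:ℝ) = 1 := by
  rw [show (2:PS) = PowerSeries.C 2 from (map_ofNat PowerSeries.C 2).symm, ← map_mul]; norm_num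

lemma two_cancel {f g : PS} (h : 2 * f = 2 * g) : f = g := by
  linear_combination PowerSeries.C (1/2:ℝ) * h - (f - g) * C_two

lemma A_sq4 : 4 * (Aa 1 * Aa 1) = 4 + PowerSeries.X ^ 2 := by
  rw [A_A, q]; linear_combination PowerSeries.X^2 * C_four

lemma PhiP_succ (x : ℝ) (h : PhiP x) : PhiP (x+1) := by
  unfold PhiP at *
  have d0 := Phi_diff x
  have d1 := Phi_diff (x+1/2)
  have d2 := Phi_diff (x+1)
  rw [show x + 1/2 + 1/2 = x + 1 by ring, show x + 1/2 - 1/2 = x by ring] at d1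
  rw [show x + 1 - 1/2 = x + 1/2 by ring] at d2 ⊢
  apply two_cancel
  have a := A_sq4
  linear_combination (2 + PowerSeries.X^2) * (h + d0) - 2 * Aa 1 * PowerSeries.X * (h + d0) + (2*PowerSeries.X - 4 * Aa 1) * d1 + 2 * d2 - PowerSeries.X * Phi x * a

lemma PhiP_pred (x : ℝ) (h : PhiP x) : PhiP (x-1) := by
  unfold PhiP at *
  have d0 := Phi_diff x
  have d1 := Phi_diff (x-1/2)
  have d2 := Phi_diff (x-1)
  rw [show x - 1/2 + 1/2 = x by ring, show x - 1/2 - 1/2 = x - 1 by ring] at d1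
  rw [show x - 1 + 1/2 = x - 1/2 by ring] at d2 ⊢
  apply two_cancel
  have a := A_sq4
  linear_combination (2 + PowerSeries.X^2) * (h - d0) + 2 * Aa 1 * PowerSeries.X * (h - d0) + (2*PowerSeries.X + 4 * Aa 1) * d1 - 2 * d2 + PowerSeries.X * Phi x * a

lemma PhiP_int (x : ℤ) : PhiP (x:ℝ) := by
  induction x using Int.induction_on with
  | zero =>
    unfold PhiP
    have := Phi_half
    rw [Int.cast_zero, zero_add, zero_sub, ← neg_div, this, Phi_zero, mul_assoc, A_P, mul_one]
  | succ i ih => have := PhiP_succ _ ih; push_cast at *; exact this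
  | pred i ih => have := PhiP_pred _ ih; push_cast at *; exact this

lemma Phi_up (x : ℤ) : Phi ((x:ℝ)+1) = (1 + PowerSeries.C (1/2) * PowerSeries.X^2 + PowerSeries.X * Aa 1) * Phi x := by
  have h := PhiP_int x
  unfold PhiP at h
  have d0 := Phi_diff x
  have d1 := Phi_diff (x+1/2)
  rw [show (x:ℝ) + 1/2 + 1/2 = x + 1 by ring, show (x:ℝ) + 1/2 - 1/2 = x by ring] at d1
  apply two_cancel
  linear_combination PowerSeries.X * (h + d0) + 2 * d1 - PowerSeries.X^2 * Phi x * C_two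

lemma Phi_down (x : ℤ) : Phi ((x:ℝ)-1) = (1 + PowerSeries.C (1/2) * PowerSeries.X^2 - PowerSeries.X * Aa 1) * Phi x := by
  have h := PhiP_int x
  unfold PhiP at h
  have d0 := Phi_diff x
  have d1 := Phi_diff (x-1/2)
  rw [show (x:ℝ) - 1/2 + 1/2 = x by ring, show (x:ℝ) - 1/2 - 1/2 = x - 1 by ring] at d1
  apply two_cancel
  linear_combination - PowerSeries.X * (h - d0) - 2 * d1 - PowerSeries.X^2 * Phi x * C_two

abbrev CS := PowerSeries ℂ
def ph : PS →+* CS := PowerSeries.map Complex.ofRealHom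
def rs : PS →+* CS := (PowerSeries.rescale Complex.I).comp ph

lemma rs_P : rs (P 1) = ph (P (-1)) := by
  ext j
  simp only [rs, ph, RingHom.comp_apply, PowerSeries.coeff_rescale, PowerSeries.coeff_map, P,
    PowerSeries.coeff_mk, Complex.ofRealHom_eq_coe]
  induction j using Nat.twoStepInduction with
  | zero => simp [ps]
  | one => simp [ps]
  | more j ih _ =>
    rw [ps, ps, Complex.ofReal_mul (_ / _) (ps (-1) j), ← ih, pow_add, Complex.I_sq]
    push_cast
    ring

lemma rs_C (c : ℝ) : rs (PowerSeries.C c) = ph (PowerSeries.C c) := by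
  ext j
  simp only [rs, ph, RingHom.comp_apply, PowerSeries.coeff_rescale, PowerSeries.map_C, PowerSeries.coeff_C]
  rcases j with _ | j <;> simp

lemma rs_X : rs PowerSeries.X = PowerSeries.C Complex.I * ph PowerSeries.X := by
  simp [rs, ph, PowerSeries.rescale_X]

lemma CI_sq : PowerSeries.C Complex.I * PowerSeries.C Complex.I = (-1 : CS) := by
  rw [← map_mul, Complex.I_mul_I]; simp

lemma rs_X2 : rs (PowerSeries.X ^ 2) = - ph (PowerSeries.X ^ 2) := by
  rw [map_pow, rs_X, map_pow]; linear_combination (ph PowerSeries.X)^2 * CI_sq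

lemma rs_q : rs (q 1) = ph (q (-1)) := by
  have : (PowerSeries.C (-1/4:ℝ) : PS) = - PowerSeries.C (1/4:ℝ) := by rw [← map_neg]; norm_num
  rw [q, q, this, map_add, map_add, map_mul, map_mul, rs_X2, rs_C, map_one, map_one, map_neg]; ring

lemma rs_A : rs (Aa 1) = ph (Aa (-1)) := by
  rw [Aa, Aa, map_mul, map_mul, rs_q, rs_P]

def ZZ (x y : ℝ) : CS := rs (Phi y) * ph (Phi x)

lemma coeff_ZZ (k : ℕ) (x y : ℝ) : PowerSeries.coeff k (ZZ x y) = Z k x y := by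
  rw [ZZ, PowerSeries.coeff_mul, Finset.Nat.sum_antidiagonal_eq_sum_range_succ_mk, Z]
  refine Finset.sum_congr rfl fun l _ => ?_
  simp only [rs, ph, RingHom.comp_apply, PowerSeries.coeff_rescale, PowerSeries.coeff_map, Phi,
    PowerSeries.coeff_mk, Complex.ofRealHom_eq_coe]
  ring

lemma Q_succ (u : ℤ × ℤ → ℂ) (n : ℕ) : Q u (n+1) = (4:ℝ)⁻¹ ^ n *
    ∑ s ∈ Fintype.piFinset (fun _ : Fin n => Sfin),
      (4:ℝ)⁻¹ * ∑ e ∈ Sfin, ‖u (∑ i, s i + e)‖ ^ 2 := by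
  rw [Q, pow_succ, mul_assoc, ← Finset.mul_sum]
  congr 2
  rw [← Finset.sum_product']
  refine Finset.sum_bij' (fun s _ => (Fin.tail s, s 0)) (fun p _ => Fin.cons p.2 p.1) ?_ ?_ ?_ ?_ ?_
  · intro s hs
    rw [Fintype.mem_piFinset] at hs
    exact Finset.mem_product.2 ⟨Fintype.mem_piFinset.2 fun i => hs i.succ, hs 0⟩
  · intro p hp
    obtain ⟨h1, h2⟩ := Finset.mem_product.1 hp
    rw [Fintype.mem_piFinset] at *
    intro i
    refine Fin.cases ?_ (fun i => ?_) i
    · simpa using h2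
    · simpa using h1 i
  · intro s _; simp
  · intro p _; simp
  · intro s _
    rw [Fin.sum_univ_succ, add_comm]; rfl

def uu (k : ℕ) (f : PS) (p : ℤ × ℤ) : ℂ := PowerSeries.coeff k (ph f * ZZ p.1 p.2)

lemma norm_ident (α β γ δ : ℂ) :
    (4:ℝ)⁻¹ * (‖α + (1/2:ℝ) * β + γ‖^2 + (‖α + (1/2:ℝ) * β - γ‖^2 +
      (‖α - (1/2:ℝ) * β + Complex.I * δ‖^2 + ‖α - (1/2:ℝ) * β - Complex.I * δ‖^2))) =
    ‖α‖^2 + (1/4 * ‖β‖^2 + 1/2 * ‖γ‖^2 + 1/2 * ‖δ‖^2) := by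
  simp only [Complex.sq_norm, Complex.normSq_apply]
  simp
  ring

lemma ph_C (c : ℝ) : ph (PowerSeries.C c) = PowerSeries.C (c:ℂ) := by simp [ph]

lemma uu_step (k : ℕ) (f : PS) (p : ℤ × ℤ) :
    (4:ℝ)⁻¹ * ∑ e ∈ Sfin, ‖uu k f (p + e)‖ ^ 2 =
    ‖uu k f p‖^2 + (1/4 * ‖uu k (PowerSeries.X^2 * f) p‖^2 + 1/2 * ‖uu k (PowerSeries.X * Aa 1 * f) p‖^2
      + 1/2 * ‖uu k (PowerSeries.X * Aa (-1) * f) p‖^2) := by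
  rw [← norm_ident]
  have hs : ∑ e ∈ Sfin, ‖uu k f (p + e)‖ ^ 2 = ‖uu k f (p + (1,0))‖^2 + (‖uu k f (p + (-1,0))‖^2 +
      (‖uu k f (p + (0,1))‖^2 + ‖uu k f (p + (0,-1))‖^2)) := by
    unfold Sfin
    rw [Finset.sum_insert (by decide), Finset.sum_insert (by decide), Finset.sum_insert (by decide),
      Finset.sum_singleton]
  rw [hs]
  obtain ⟨x, y⟩ := p
  have e1 : uu k f ((x,y) + (1,0)) = uu k f (x,y) + (1/2:ℝ) * uu k (PowerSeries.X^2 * f) (x,y) +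
      uu k (PowerSeries.X * Aa 1 * f) (x,y) := by
    simp only [uu, Prod.mk_add_mk, add_zero, ZZ]
    push_cast
    rw [Phi_up]
    simp only [map_mul ph, map_add ph, map_one, ph_C]
    rw [← PowerSeries.coeff_C_mul, ← map_add, ← map_add]
    congr 1; push_cast; ring
  have e2 : uu k f ((x,y) + (-1,0)) = uu k f (x,y) + (1/2:ℝ) * uu k (PowerSeries.X^2 * f) (x,y) -
      uu k (PowerSeries.X * Aa 1 * f) (x,y) := by
    simp only [uu, Prod.mk_add_mk, add_zero, ZZ]
    push_cast
    rw [← sub_eq_add_neg, Phi_down]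
    simp only [map_mul ph, map_add ph, map_sub ph, map_one, ph_C]
    rw [← PowerSeries.coeff_C_mul, ← map_add, ← map_sub]
    congr 1; push_cast; ring
  have e3 : uu k f ((x,y) + (0,1)) = uu k f (x,y) - (1/2:ℝ) * uu k (PowerSeries.X^2 * f) (x,y) +
      Complex.I * uu k (PowerSeries.X * Aa (-1) * f) (x,y) := by
    simp only [uu, Prod.mk_add_mk, add_zero, ZZ]
    push_cast
    rw [Phi_up]
    simp only [map_mul rs, map_add rs, map_one, rs_C, rs_X2, rs_X, rs_A, ph_C, map_mul ph]
    rw [← PowerSeries.coeff_C_mul, ← PowerSeries.coeff_C_mul, ← map_sub, ← map_add]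
    congr 1; push_cast; ring
  have e4 : uu k f ((x,y) + (0,-1)) = uu k f (x,y) - (1/2:ℝ) * uu k (PowerSeries.X^2 * f) (x,y) -
      Complex.I * uu k (PowerSeries.X * Aa (-1) * f) (x,y) := by
    simp only [uu, Prod.mk_add_mk, add_zero, ZZ]
    push_cast
    rw [← sub_eq_add_neg, Phi_down]
    simp only [map_mul rs, map_add rs, map_sub rs, map_one, rs_C, rs_X2, rs_X, rs_A, ph_C, map_mul ph]
    rw [← PowerSeries.coeff_C_mul, ← PowerSeries.coeff_C_mul, ← map_sub, ← map_sub]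
    congr 1; push_cast; ring
  rw [e1, e2, e3, e4]

lemma Q_uu (k n : ℕ) (f : PS) : Q (uu k f) n = Bn k n f f := by
  induction n generalizing f with
  | zero =>
    have h0 : uu k f 0 = ((PowerSeries.coeff k (f * hh) : ℝ) : ℂ) := by
      unfold uu ZZ
      simp only [Prod.fst_zero, Prod.snd_zero, Int.cast_zero, Phi_zero, rs_P]
      rw [mul_comm (ph (P (-1))), ← map_mul, ← map_mul, ph, PowerSeries.coeff_map]
      rfl
    simp only [Q, Bn, B0_apply]
    simp [h0, pow_two]
  | succ n ih =>
    rw [Q_succ, Bn, LinearMap.add_apply, LinearMap.add_apply, G_apply, ← ih, ← ih, ← ih, ← ih]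
    simp only [uu_step, Finset.sum_add_distrib, ← Finset.mul_sum, Q]
    ring

lemma Qk_eq (k n : ℕ) : Qk k n = Bn k n 1 1 := by
  rw [← Q_uu, Qk]
  congr 1
  funext p
  rw [uu, map_one, one_mul, coeff_ZZ]

lemma gbinom_nat (n m : ℕ) : gbinom (n:ℝ) m = n.choose m := by
  induction m generalizing n with
  | zero => simp [gbinom]
  | succ m ih =>
    induction n with
    | zero =>
      unfold gbinom
      rw [Finset.prod_range_succ']; simp
    | succ n ihn =>
      have := gbinom_pascal n m
      rw [ihn, ih] at this
      rw [Nat.choose_succ_succ]; push_cast; linarith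

lemma a_eq (k j : ℕ) : a k j = Dm k (k-j) 0 1 1 := by
  rw [← fwd_iter, a]
  rw [show Qk k = fun n => Bn k n 1 1 from funext fun n => Qk_eq k n]

lemma sum_reindex (k n : ℕ) (hkn : k ≤ n) (c : ℕ → ℝ) :
    ∑ m ∈ Finset.range (n+1), c m * ((n.choose m : ℝ) * Dm k m 0 1 1) =
    ∑ j ∈ Finset.range (k+1), c (k-j) * (a k j * gbinom (n:ℝ) (k-j)) := by
  rw [← Finset.sum_subset (Finset.range_mono (show k+1 ≤ n+1 by omega)),
    ← Finset.sum_flip]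
  · refine Finset.sum_congr rfl fun j _ => ?_
    rw [a_eq, gbinom_nat]; ring
  · intro m _ hm
    rw [Dm_zero k m 0 (by simpa using hm)]; simp

theorem pseudo_recursion :
    ∃ A > (5 : ℝ), ∃ B > (1 : ℝ), ∀ k n : ℕ, 2 * k < n →
      (∑ j ∈ (Finset.range (k + 1)).filter (fun j : ℕ => (j : ℝ) ≤ 5 * (k : ℝ) ^ 2 / n),
          a k j * gbinom (n : ℝ) (k - j)) ≤ Qk k n ∧
      Qk k n ≤ B * ∑ j ∈ (Finset.range (k + 1)).filter (fun j : ℕ => (j : ℝ) ≤ A * (k : ℝ) ^ 2 / n),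
          a k j * gbinom (n : ℝ) (k - j) := by
  refine ⟨560, by norm_num, 2, by norm_num, ?_⟩
  intro k n hn
  set w : ℕ → ℝ := fun j => a k j * gbinom (n : ℝ) (k - j) with hw
  have hw0 : ∀ j, 0 ≤ w j := by
    intro j
    simp only [hw]
    rw [a_eq, gbinom_nat]
    exact mul_nonneg ((Psd_Dm _ _ _).1 1) (by positivity)
  have hQ : Qk k n = ∑ j ∈ Finset.range (k+1), w j := by
    have := sum_reindex k n (by omega) (fun _ => 1)
    simp only [one_mul] at this
    rw [Qk_eq, Bn_eq_Dm, newton]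
    simp only [zero_add]
    exact this
  refine ⟨?_, ?_⟩
  · rw [hQ]
    exact Finset.sum_le_sum_of_subset_of_nonneg (Finset.filter_subset _ _) fun j _ _ => hw0 j
  rcases Nat.eq_zero_or_pos k with rfl | hk
  · rw [hQ]
    have := hw0 0
    simp
    linarith
  obtain ⟨N, rfl⟩ : ∃ N, n = N + 1 := ⟨n-1, by omega⟩
  have hd := defect k N hk (by omega)
  have hmean : k * Bn k (N+1) 1 1 - ((N:ℝ)+1) * Dm k 1 N 1 1 = ∑ j ∈ Finset.range (k+1), (j:ℝ) * w j := by
    have h1 := sum_reindex k (N+1) (by omega) (fun m => (m:ℝ))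
    rw [mean_formula, ← Qk_eq, hQ, h1, Finset.mul_sum, ← Finset.sum_sub_distrib]
    refine Finset.sum_congr rfl fun j hj => ?_
    rw [Nat.cast_sub (by simpa [Nat.lt_succ_iff] using hj)]
    simp only [hw]; ring
  rw [hmean, ← Qk_eq] at hd
  set T : ℝ := (k:ℝ)^2 / ((N+1:ℕ):ℝ) with hT
  have hTpos : 0 < T := by have : (0:ℝ) < k := by exact_mod_cast hk
                           positivity
  have hd' : ∑ j ∈ Finset.range (k+1), (j:ℝ) * w j ≤ 280 * T * Qk k (N+1) := by
    refine hd.trans (le_of_eq ?_)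
    rw [hT]; push_cast; ring
  rw [mul_div_assoc, ← hT]
  have hsplit := Finset.sum_filter_add_sum_filter_not (Finset.range (k+1)) (fun j : ℕ => (j:ℝ) ≤ 560 * T) w
  rw [← hQ] at hsplit
  have htail : 560 * T * ∑ j ∈ (Finset.range (k+1)).filter (fun j : ℕ => ¬ (j:ℝ) ≤ 560 * T), w j ≤
      ∑ j ∈ Finset.range (k+1), (j:ℝ) * w j := by
    rw [Finset.mul_sum]
    refine le_trans (Finset.sum_le_sum (g := fun j : ℕ => (j:ℝ) * w j) ?_)
      (Finset.sum_le_sum_of_subset_of_nonneg (Finset.filter_subset _ _) ?_)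
    · intro j hj
      have := (Finset.mem_filter.1 hj).2
      exact mul_le_mul_of_nonneg_right (not_le.1 this).le (hw0 j)
    · intro j _ _; exact mul_nonneg (by positivity) (hw0 j)
  have hfin : ∑ j ∈ (Finset.range (k+1)).filter (fun j : ℕ => ¬ (j:ℝ) ≤ 560 * T), w j ≤ 1/2 * Qk k (N+1) := by
    have := htail.trans hd'
    have h2 : (560 * T) * ∑ j ∈ (Finset.range (k+1)).filter (fun j : ℕ => ¬ (j:ℝ) ≤ 560 * T), w j ≤ (560 * T) * (1/2 * Qk k (N+1)) := by linarith
    exact le_of_mul_le_mul_left h2 (by positivity)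
  linarith
end
end

section
/- Let n > 0 be a real number and define F(x) := 1 + n·x/((n − x)·(4n − x)) for real x with |x| < n. If y, z ∈ ℝ satisfy y + z ≥ 0, |y| < n and |z| < n, then F(y)·F(z) ≥ 1. -/
open Finset

noncomputable section

theorem F_product_ge_one (n : ℝ) (hn : 0 < n) (y z : ℝ)
    (hyz : 0 ≤ y + z) (hy : |y| < n) (hz : |z| < n) :
    1 ≤ (1 + n * y / ((n - y) * (4 * n - y))) * (1 + n * z / ((n - z) * (4 * n - z))) := by
  obtain ⟨hy1, hy2⟩ := abs_lt.mp hy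
  obtain ⟨hz1, hz2⟩ := abs_lt.mp hz
  have a1 : 0 < n - y := by linarith
  have a2 : 0 < 4 * n - y := by linarith
  have b1 : 0 < n - z := by linarith
  have b2 : 0 < 4 * n - z := by linarith
  have e : (1 + n * y / ((n - y) * (4 * n - y))) * (1 + n * z / ((n - z) * (4 * n - z)))
      = ((2 * n - y) ^ 2 * (2 * n - z) ^ 2) /
        (((n - y) * (4 * n - y)) * ((n - z) * (4 * n - z))) := by
    rw [one_add_div (mul_pos a1 a2).ne', one_add_div (mul_pos b1 b2).ne', div_mul_div_comm]
    congr 1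
    ring
  rw [e, one_le_div (by positivity)]
  have h1 : 0 ≤ (9 * n - (y + z)) * (y - z) ^ 2 :=
    mul_nonneg (by linarith) (sq_nonneg _)
  have h2 : 0 ≤ (2 * n - (y + z)) * (7 * n - (y + z)) :=
    mul_nonneg (by linarith) (by linarith)
  have h3 : 0 ≤ (y + z) * ((2 * n - (y + z)) * (7 * n - (y + z)) + 2 * n ^ 2) :=
    mul_nonneg hyz (by positivity)
  have h4 := mul_nonneg hn.le (add_nonneg h1 h3)
  linarith
end
end

section
/- For every j ∈ ℕ and every x ∈ ℝ one has F_j(x)² ≤ x^{2j}/(j!)² + 1. -/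
open Finset

noncomputable section

theorem prod_abs_le (k : ℕ) : ∀ y : ℝ, 0 ≤ y → y ≤ k →
    |∏ i ∈ Finset.range k, (y - i)| ≤ (Nat.factorial k : ℝ) := by
  induction k with
  | zero => intro y _ _; simp
  | succ k ih =>
    intro y h0 h1
    push_cast at h1
    rw [Nat.factorial_succ]
    push_cast
    by_cases hk : y ≤ k
    · rw [Finset.prod_range_succ, abs_mul, mul_comm]
      apply mul_le_mul _ (ih y h0 hk) (abs_nonneg _) (by positivity)
      rw [abs_le]; constructor <;> linarith
    · push Not at hk
      rw [Finset.prod_range_succ', abs_mul, mul_comm]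
      rcases Nat.eq_zero_or_pos k with rfl | hp
      · simp at *
        rw [abs_le]; constructor <;> linarith
      · have h2 : (1 : ℝ) ≤ k := by exact_mod_cast hp
        have h3 := ih (y - 1) (by linarith) (by linarith)
        have h4 : ∏ i ∈ Finset.range k, (y - ((i + 1 : ℕ) : ℝ))
            = ∏ i ∈ Finset.range k, (y - 1 - i) := by
          apply Finset.prod_congr rfl
          intro i _
          push_cast; ring
        rw [h4]
        apply mul_le_mul _ h3 (abs_nonneg _) (by positivity)
        rw [abs_le]; push_cast; constructor <;> linarith

theorem prod_sq_eq (k : ℕ) (x : ℝ) :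
    (∏ i ∈ Finset.range k, (x + ((k : ℝ) - 1) / 2 - i)) ^ 2
      = ∏ i ∈ Finset.range k, (x ^ 2 - (((k : ℝ) - 1) / 2 - i) ^ 2) := by
  rw [sq]
  nth_rewrite 2 [← Finset.prod_range_reflect]
  rw [← Finset.prod_mul_distrib]
  apply Finset.prod_congr rfl
  intro i hi
  have hi := Finset.mem_range.mp hi
  have : ((k - 1 - i : ℕ) : ℝ) = (k : ℝ) - 1 - i := by
    rw [Nat.cast_sub (by omega), Nat.cast_sub (by omega)]; simp
  rw [this]; ring

theorem F_bound (j : ℕ) (x : ℝ) :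
    F j x ^ 2 ≤ x ^ (2 * j) / (Nat.factorial j : ℝ) ^ 2 + 1 := by
  have hf : (0 : ℝ) < (Nat.factorial j : ℝ) := by exact_mod_cast Nat.factorial_pos j
  unfold F gbinom
  rw [div_pow]
  have hx : 0 ≤ x ^ (2 * j) := by rw [pow_mul]; positivity
  rw [div_add_one (by positivity)]
  apply div_le_div_of_nonneg_right _ (by positivity)
  by_cases h : |x| ≤ ((j : ℝ) - 1) / 2
  · obtain ⟨h1, h2⟩ := abs_le.mp h
    have := prod_abs_le j (x + ((j : ℝ) - 1) / 2) (by linarith) (by linarith)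
    have := sq_le_sq' (by linarith [neg_le_of_abs_le this]) (le_of_abs_le this)
    linarith
  · push Not at h
    rw [prod_sq_eq]
    have : ∏ i ∈ Finset.range j, (x ^ 2 - (((j : ℝ) - 1) / 2 - i) ^ 2)
        ≤ ∏ i ∈ Finset.range j, x ^ 2 := by
      apply Finset.prod_le_prod
      · intro i hi
        have hi : ((i + 1 : ℕ) : ℝ) ≤ j := by exact_mod_cast Finset.mem_range.mp hi
        push_cast at hi
        have h0 : (0 : ℝ) ≤ i := Nat.cast_nonneg i
        rw [sub_nonneg, sq_le_sq]
        refine le_trans ?_ h.le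
        rw [abs_le]; constructor <;> linarith
      · intro i _
        linarith [sq_nonneg (((j : ℝ) - 1) / 2 - i)]
    rw [Finset.prod_const, Finset.card_range, ← pow_mul] at this
    nlinarith
end
end

section
/- For every k ∈ ℕ and all x, y ∈ ℝ one has |Z̃_k(x,y)|² ≤ 3·32^k·Σ_{l=0}^{k} (x^{2l} + y^{2l})/(4^l·(l!)²). -/
open Finset

noncomputable section

/-- `Z̃_k(x,y) = 2^k Z_k(x/2, y/2)`. -/
noncomputable def Ztilde (k : ℕ) (x y : ℝ) : ℂ := 2 ^ k * Z k (x / 2) (y / 2)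


/-- partial exponential sum -/
def SS (n : ℕ) (a : ℝ) : ℝ := ∑ p ∈ Finset.range (n + 1), a ^ p / (Nat.factorial p : ℝ)

lemma F_step (n : ℕ) (z : ℝ) :
    F (n + 2) z = F n z * ((z ^ 2 - ((n : ℝ) + 1) ^ 2 / 4) / (((n : ℝ) + 1) * (n + 2))) := by
  unfold F gbinom
  rw [Finset.prod_range_succ, Finset.prod_range_succ']
  have h : ∏ j ∈ Finset.range n, (z + (((n + 2 : ℕ) : ℝ) - 1) / 2 - ((j + 1 : ℕ) : ℝ))
      = ∏ j ∈ Finset.range n, (z + ((n : ℝ) - 1) / 2 - (j : ℝ)) := by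
    apply Finset.prod_congr rfl
    intro j _
    push_cast
    ring
  rw [h, Nat.factorial_succ, Nat.factorial_succ]
  have hf : (Nat.factorial n : ℝ) ≠ 0 := by positivity
  have h1 : (n : ℝ) + 1 ≠ 0 := by positivity
  have h2 : (n : ℝ) + 2 ≠ 0 := by positivity
  push_cast
  rw [show (n : ℝ) + 1 + 1 = n + 2 by ring]
  field_simp
  ring

lemma SS_nonneg (n : ℕ) {a : ℝ} (ha : 0 ≤ a) : 0 ≤ SS n a := by
  unfold SS; positivity

lemma SS_step (n : ℕ) {a : ℝ} (ha : 0 ≤ a) :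
    SS n a * (a ^ 2 / (((n : ℝ) + 1) * (n + 2)) + 1) ≤ 2 * SS (n + 2) a := by
  have h1 : SS n a ≤ SS (n + 2) a := by
    unfold SS
    apply Finset.sum_le_sum_of_subset_of_nonneg
    · intro i hi; simp at hi ⊢; omega
    · intros; positivity
  have h2 : SS n a * (a ^ 2 / (((n : ℝ) + 1) * (n + 2))) ≤ SS (n + 2) a := by
    have h3 : SS (n + 2) a = ∑ p ∈ Finset.range (n + 1), a ^ (p + 2) / (Nat.factorial (p + 2) : ℝ)
        + a + 1 := by
      unfold SS
      rw [Finset.sum_range_succ', Finset.sum_range_succ']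
      simp
    have h4 : SS n a * (a ^ 2 / (((n : ℝ) + 1) * (n + 2))) ≤
        ∑ p ∈ Finset.range (n + 1), a ^ (p + 2) / (Nat.factorial (p + 2) : ℝ) := by
      unfold SS
      rw [Finset.sum_mul]
      apply Finset.sum_le_sum
      intro p hp
      have hp' : (p : ℝ) ≤ n := by
        have : p ≤ n := by simp at hp; omega
        exact_mod_cast this
      rw [div_mul_div_comm, ← pow_add]
      have : (Nat.factorial (p + 2) : ℝ) = Nat.factorial p * (((p : ℝ) + 1) * (p + 2)) := by
        rw [Nat.factorial_succ, Nat.factorial_succ]; push_cast; ring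
      rw [this]
      gcongr
    linarith
  linarith

lemma G_bound (x : ℝ) : ∀ n : ℕ,
    |2 ^ n * F n (x / 2)| ≤ Real.sqrt 2 ^ n * SS n |x|
  | 0 => by simp [F, gbinom, SS]
  | 1 => by
      have h : (2 : ℝ) ^ 1 * F 1 (x / 2) = x := by simp [F, gbinom]; ring
      rw [h]
      have h2 : SS 1 |x| = 1 + |x| := by simp [SS, Finset.sum_range_succ]
      rw [h2]
      have h3 : (1 : ℝ) ≤ Real.sqrt 2 := by
        rw [Real.one_le_sqrt]; norm_num
      nlinarith [abs_nonneg x]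
  | n + 2 => by
      have ih := G_bound x n
      have h : (2 : ℝ) ^ (n + 2) * F (n + 2) (x / 2) = (2 ^ n * F n (x / 2)) *
          ((x ^ 2 - ((n : ℝ) + 1) ^ 2) / (((n : ℝ) + 1) * (n + 2))) := by
        rw [F_step]; ring
      have hb : |(x ^ 2 - ((n : ℝ) + 1) ^ 2) / (((n : ℝ) + 1) * (n + 2))| ≤
          |x| ^ 2 / (((n : ℝ) + 1) * (n + 2)) + 1 := by
        have hpos : (0 : ℝ) < ((n : ℝ) + 1) * (n + 2) := by positivity
        rw [abs_div, abs_of_pos hpos, div_add_one hpos.ne']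
        gcongr
        rw [sq_abs, abs_le]
        have : (0 : ℝ) ≤ n := Nat.cast_nonneg n
        constructor <;> nlinarith [sq_nonneg x]
      rw [h, abs_mul]
      calc _ ≤ (Real.sqrt 2 ^ n * SS n |x|) * (|x| ^ 2 / (((n : ℝ) + 1) * (n + 2)) + 1) := by
            exact mul_le_mul ih hb (abs_nonneg _) ((abs_nonneg _).trans ih)
        _ = Real.sqrt 2 ^ n * (SS n |x| * (|x| ^ 2 / (((n : ℝ) + 1) * (n + 2)) + 1)) := by ring
        _ ≤ Real.sqrt 2 ^ n * (2 * SS (n + 2) |x|) := by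
            exact mul_le_mul_of_nonneg_left (SS_step n (abs_nonneg x)) (by positivity)
        _ = _ := by rw [pow_add, Real.sq_sqrt (by norm_num)]; ring

open PowerSeries in
lemma SS_series (a : ℝ) : PowerSeries.mk (fun n => SS n a) =
    rescale a (exp ℝ) * PowerSeries.mk (fun _ => (1 : ℝ)) := by
  ext n
  rw [coeff_mul, coeff_mk, Finset.Nat.sum_antidiagonal_eq_sum_range_succ_mk]
  unfold SS
  apply Finset.sum_congr rfl
  intro p _
  simp [coeff_rescale, coeff_exp, div_eq_mul_inv]

open PowerSeries in
lemma SS_conv (k : ℕ) (a b : ℝ) :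
    ∑ l ∈ Finset.range (k + 1), SS (k - l) a * SS l b =
    ∑ m ∈ Finset.range (k + 1), (((k - m : ℕ) : ℝ) + 1) * ((a + b) ^ m / (Nat.factorial m : ℝ)) := by
  have h : PowerSeries.mk (fun n => SS n b) * PowerSeries.mk (fun n => SS n a) =
      rescale (a + b) (exp ℝ) *
        (PowerSeries.mk (fun _ => (1 : ℝ)) * PowerSeries.mk (fun _ => (1 : ℝ))) := by
    rw [SS_series, SS_series, ← exp_mul_exp_eq_exp_add]; ring
  have h2 := congrArg (coeff k) h
  rw [coeff_mul, coeff_mul, Finset.Nat.sum_antidiagonal_eq_sum_range_succ_mk,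
    Finset.Nat.sum_antidiagonal_eq_sum_range_succ_mk] at h2
  simp only [coeff_mk] at h2
  calc _ = ∑ l ∈ Finset.range (k + 1), SS l b * SS (k - l) a :=
        Finset.sum_congr rfl fun _ _ => mul_comm _ _
    _ = _ := h2
    _ = _ := by
      apply Finset.sum_congr rfl
      intro m _
      simp [coeff_mul, coeff_rescale, coeff_exp, div_eq_mul_inv]
      ring

lemma T_bound (k : ℕ) :
    ∑ m ∈ Finset.range (k + 1), ((((k - m : ℕ) : ℝ) + 1) * 4 ^ m) ^ 2 + ((k : ℝ) + 2) ^ 2 / 4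
      ≤ 3 * 16 ^ k := by
  induction k with
  | zero => norm_num
  | succ k ih =>
    rw [Finset.sum_range_succ']
    have h : ∀ m ∈ Finset.range (k + 1),
        ((((k + 1 - (m + 1) : ℕ) : ℝ) + 1) * 4 ^ (m + 1)) ^ 2 =
          16 * ((((k - m : ℕ) : ℝ) + 1) * 4 ^ m) ^ 2 := by
      intro m _
      rw [Nat.add_sub_add_right]; ring
    rw [Finset.sum_congr rfl h, ← Finset.mul_sum]
    have : (0 : ℝ) ≤ k := Nat.cast_nonneg k
    push_cast [Nat.sub_zero]
    rw [pow_succ (16 : ℝ) k]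
    nlinarith

lemma norm_bound (k : ℕ) (x y : ℝ) :
    ‖Ztilde k x y‖ ≤ Real.sqrt 2 ^ k * ∑ l ∈ Finset.range (k + 1), SS (k - l) |x| * SS l |y| := by
  unfold Ztilde Z
  rw [Finset.mul_sum, Finset.mul_sum]
  refine (norm_sum_le _ _).trans (Finset.sum_le_sum ?_)
  intro l hl
  have hl' : k - l + l = k := by simp at hl; omega
  have e1 : ‖(2 : ℂ) ^ k * (Complex.I ^ l * (F (k - l) (x / 2) : ℂ) * (F l (y / 2) : ℂ))‖ =
      |2 ^ (k - l) * F (k - l) (x / 2)| * |2 ^ l * F l (y / 2)| := by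
    simp only [norm_mul, norm_pow, Complex.norm_I, one_pow, Complex.norm_real, Real.norm_eq_abs,
      abs_mul, abs_pow, Complex.norm_ofNat, abs_two]
    nth_rewrite 1 [← hl']
    rw [pow_add]; ring
  rw [e1]
  have e2 : Real.sqrt 2 ^ k = Real.sqrt 2 ^ (k - l) * Real.sqrt 2 ^ l := by
    rw [← pow_add, hl']
  rw [e2]
  have h0 := SS_nonneg (k - l) (abs_nonneg x)
  calc _ ≤ (Real.sqrt 2 ^ (k - l) * SS (k - l) |x|) * (Real.sqrt 2 ^ l * SS l |y|) := by
        gcongr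
        · exact G_bound x (k - l)
        · exact G_bound y l
    _ = _ := by ring

lemma pow_bound (m : ℕ) (x y : ℝ) :
    (|x| + |y|) ^ (2 * m) ≤ 4 ^ m * (x ^ (2 * m) + y ^ (2 * m)) := by
  have hx : x ^ (2 * m) = |x| ^ (2 * m) := by rw [pow_mul, pow_mul, sq_abs]
  have hy : y ^ (2 * m) = |y| ^ (2 * m) := by rw [pow_mul, pow_mul, sq_abs]
  rw [hx, hy, show (4 : ℝ) ^ m = 2 ^ (2 * m) by rw [pow_mul]; norm_num, mul_add, ← mul_pow,
    ← mul_pow]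
  rcases le_total |x| |y| with h | h
  · have : (|x| + |y|) ^ (2 * m) ≤ (2 * |y|) ^ (2 * m) := by gcongr; linarith
    have : 0 ≤ (2 * |x|) ^ (2 * m) := by positivity
    linarith
  · have : (|x| + |y|) ^ (2 * m) ≤ (2 * |x|) ^ (2 * m) := by gcongr; linarith
    have : 0 ≤ (2 * |y|) ^ (2 * m) := by positivity
    linarith

theorem Ztilde_bound (k : ℕ) (x y : ℝ) :
    ‖Ztilde k x y‖ ^ 2 ≤ 3 * 32 ^ k *
      ∑ l ∈ Finset.range (k + 1), (x ^ (2 * l) + y ^ (2 * l)) / (4 ^ l * (Nat.factorial l : ℝ) ^ 2) := by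
  have h := norm_bound k x y
  rw [SS_conv] at h
  have e : ∑ m ∈ Finset.range (k + 1),
      (((k - m : ℕ) : ℝ) + 1) * ((|x| + |y|) ^ m / (Nat.factorial m : ℝ)) =
      ∑ m ∈ Finset.range (k + 1),
      ((((k - m : ℕ) : ℝ) + 1) * 4 ^ m) * ((|x| + |y|) ^ m / (4 ^ m * (Nat.factorial m : ℝ))) := by
    apply Finset.sum_congr rfl
    intro m _
    field_simp
  rw [e] at h
  have cs := Finset.sum_mul_sq_le_sq_mul_sq (Finset.range (k + 1))
    (fun m => (((k - m : ℕ) : ℝ) + 1) * 4 ^ m)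
    (fun m => (|x| + |y|) ^ m / (4 ^ m * (Nat.factorial m : ℝ)))
  have hT : ∑ m ∈ Finset.range (k + 1), ((((k - m : ℕ) : ℝ) + 1) * 4 ^ m) ^ 2 ≤ 3 * 16 ^ k := by
    have := T_bound k
    have : 0 ≤ ((k : ℝ) + 2) ^ 2 / 4 := by positivity
    linarith
  have hU : ∑ m ∈ Finset.range (k + 1), ((|x| + |y|) ^ m / (4 ^ m * (Nat.factorial m : ℝ))) ^ 2 ≤
      ∑ l ∈ Finset.range (k + 1),
        (x ^ (2 * l) + y ^ (2 * l)) / (4 ^ l * (Nat.factorial l : ℝ) ^ 2) := by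
    apply Finset.sum_le_sum
    intro m _
    have hp := pow_bound m x y
    rw [div_pow, ← pow_mul, mul_comm m 2, mul_pow]
    rw [div_le_div_iff₀ (by positivity) (by positivity)]
    calc _ ≤ (4 ^ m * (x ^ (2 * m) + y ^ (2 * m))) * (4 ^ m * (Nat.factorial m : ℝ) ^ 2) := by
          gcongr
      _ = _ := by ring
  calc _ ≤ _ := pow_le_pow_left₀ (norm_nonneg _) h 2
    _ = 2 ^ k * _ := by
        rw [mul_pow, ← pow_mul, mul_comm k 2, pow_mul, Real.sq_sqrt (by norm_num)]
    _ ≤ 2 ^ k * ((3 * 16 ^ k) * _) := by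
        refine mul_le_mul_of_nonneg_left (cs.trans ?_) (by positivity)
        exact mul_le_mul hT hU (Finset.sum_nonneg fun _ _ => sq_nonneg _) (by positivity)
    _ = _ := by
        rw [show (32 : ℝ) = 2 * 16 by norm_num, mul_pow]; ring
end
end

section
/- For all k, n ∈ ℕ, the 2k-th moment of the first coordinate of the simple random walk on ℤ² at time n satisfies 4^{-n}·Σ_{(s_1,…,s_n)∈S^n} (π₁(s_1+⋯+s_n))^{2k} ≤ ((2k)!/(4^k·k!))·n^k, where π₁ : ℤ² → ℤ is the projection onto the first coordinate. -/
open Finset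

noncomputable section

/-- Moments of the centred Gaussian of variance one half. -/
def gmom (k : ℕ) : ℝ := ((2 * k).factorial : ℝ) / (4 ^ k * Nat.factorial k)

lemma gmom_zero : gmom 0 = 1 := by simp [gmom]

lemma gmom_succ (k : ℕ) : gmom (k + 1) = gmom k * ((2 * k + 1) / 2) := by
  unfold gmom
  rw [show 2 * (k + 1) = (2 * k + 1) + 1 by ring, Nat.factorial_succ, Nat.factorial_succ,
    Nat.factorial_succ]
  have := Nat.cast_ne_zero (R := ℝ).2 (Nat.factorial_ne_zero k)
  push_cast
  field_simp
  ring

lemma gmom_pos (k : ℕ) : 0 < gmom k := by unfold gmom; positivity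

lemma half_le_gmom (k : ℕ) : 1 / 2 ≤ gmom (k + 1) := by
  induction k with
  | zero => rw [gmom_succ, gmom_zero]; norm_num
  | succ k ih =>
    rw [gmom_succ]
    push_cast
    have hk : (0 : ℝ) ≤ k := Nat.cast_nonneg k
    nlinarith

lemma choose_gmom (k j : ℕ) (h : j ≤ k) :
    ((2 * k).choose (2 * j) : ℝ) * gmom j * gmom (k - j) = gmom k * (k.choose j : ℝ) := by
  obtain ⟨i, rfl⟩ := Nat.exists_eq_add_of_le h
  rw [Nat.cast_choose ℝ h, Nat.cast_choose ℝ (by omega : 2 * j ≤ 2 * (j + i))]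
  rw [show 2 * (j + i) - 2 * j = 2 * i by omega, show j + i - j = i by omega]
  unfold gmom
  have h1 := Nat.cast_ne_zero (R := ℝ).2 (Nat.factorial_ne_zero j)
  have h2 := Nat.cast_ne_zero (R := ℝ).2 (Nat.factorial_ne_zero i)
  have h3 := Nat.cast_ne_zero (R := ℝ).2 (Nat.factorial_ne_zero (2 * j))
  have h4 := Nat.cast_ne_zero (R := ℝ).2 (Nat.factorial_ne_zero (2 * i))
  have h5 := Nat.cast_ne_zero (R := ℝ).2 (Nat.factorial_ne_zero (j + i))
  field_simp
  ring

lemma sum_split (f : ℕ → ℝ) (k : ℕ) :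
    ∑ i ∈ range (2 * k + 1), f i
      = ∑ j ∈ range (k + 1), f (2 * j) + ∑ j ∈ range k, f (2 * j + 1) := by
  induction k with
  | zero => simp
  | succ k ih =>
    rw [show 2 * (k + 1) + 1 = (2 * k + 1) + 1 + 1 by ring, sum_range_succ, sum_range_succ, ih,
      sum_range_succ _ (k + 1), sum_range_succ _ k, show 2 * (k + 1) = 2 * k + 1 + 1 by ring]
    rw [sum_range_succ (fun j => f (2 * j + 1)) k]
    ring

lemma sym_binom (a : ℝ) (k : ℕ) :
    (a + 1) ^ (2 * k) + (a - 1) ^ (2 * k)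
      = 2 * ∑ j ∈ range (k + 1), ((2 * k).choose (2 * j) : ℝ) * a ^ (2 * j) := by
  have e : (a - 1) ^ (2 * k) = (-a + 1) ^ (2 * k) := by
    rw [show -a + 1 = -(a - 1) by ring, Even.neg_pow (even_two_mul k)]
  rw [e, add_pow, add_pow, sum_split, sum_split]
  simp only [one_pow, mul_one, Even.neg_pow (even_two_mul _), Odd.neg_pow (odd_two_mul_add_one _),
    neg_mul, sum_neg_distrib]
  simp only [mul_comm (a ^ _)]
  ring

lemma step_bound (a : ℝ) (k : ℕ) :
    (4 : ℝ)⁻¹ * ((a + 1) ^ (2 * k) + (a - 1) ^ (2 * k) + 2 * a ^ (2 * k))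
      ≤ ∑ j ∈ range (k + 1), ((2 * k).choose (2 * j) : ℝ) * gmom (k - j) * a ^ (2 * j) := by
  rw [sym_binom, sum_range_succ, sum_range_succ]
  simp only [Nat.choose_self, Nat.sub_self, gmom_zero, Nat.cast_one, one_mul]
  have : (1 / 2 : ℝ) * ∑ j ∈ range k, ((2 * k).choose (2 * j) : ℝ) * a ^ (2 * j)
      ≤ ∑ j ∈ range k, ((2 * k).choose (2 * j) : ℝ) * gmom (k - j) * a ^ (2 * j) := by
    rw [mul_sum]
    refine sum_le_sum fun j hj => ?_
    have hj' := mem_range.1 hj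
    obtain ⟨i, hi⟩ := Nat.exists_eq_add_of_lt hj'
    have h := half_le_gmom i
    rw [show k - j = i + 1 by omega]
    have ha : 0 ≤ a ^ (2 * j) := Even.pow_nonneg (even_two_mul j) a
    have hc : (0 : ℝ) ≤ ((2 * k).choose (2 * j) : ℝ) := Nat.cast_nonneg _
    nlinarith [mul_le_mul_of_nonneg_left h (mul_nonneg hc ha)]
  linarith

/-- Peeling off the first step. -/
lemma sum_pi_succ (n : ℕ) (f : ℤ × ℤ → ℝ) :
    ∑ s ∈ Fintype.piFinset (fun _ : Fin (n + 1) => Sfin), f (∑ i, s i)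
      = ∑ s ∈ Fintype.piFinset (fun _ : Fin n => Sfin), ∑ x ∈ Sfin, f (x + ∑ i, s i) := by
  rw [← sum_product']
  refine sum_nbij' (fun s => (Fin.tail s, s 0)) (fun p => Fin.cons p.2 p.1) ?_ ?_ ?_ ?_ ?_
  · intro s hs
    simp only [Fintype.mem_piFinset, mem_product] at hs ⊢
    exact ⟨fun i => hs i.succ, hs 0⟩
  · intro p hp
    simp only [Fintype.mem_piFinset, mem_product] at hp ⊢
    intro i
    refine Fin.cases ?_ (fun i => ?_) i
    · simpa using hp.2
    · simpa using hp.1 i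
  · intro s _
    simp
  · intro p _
    simp
  · intro s _
    simp [Fin.sum_univ_succ, Fin.tail]

lemma sum_S (f : ℤ × ℤ → ℝ) :
    ∑ x ∈ Sfin, f x = f (1, 0) + f (-1, 0) + f (0, 1) + f (0, -1) := by
  unfold Sfin
  rw [sum_insert (by decide), sum_insert (by decide), sum_insert (by decide), sum_singleton]
  ring

theorem rw_moment_bound (k n : ℕ) :
    (4 : ℝ)⁻¹ ^ n * ∑ s ∈ Fintype.piFinset (fun _ : Fin n => Sfin), ((∑ i, s i).1 : ℝ) ^ (2 * k)
      ≤ ((2 * k).factorial : ℝ) / (4 ^ k * Nat.factorial k) * (n : ℝ) ^ k := by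
  change _ ≤ gmom k * (n : ℝ) ^ k
  induction n generalizing k with
  | zero =>
    cases k with
    | zero => simp [gmom_zero]
    | succ k => simp
  | succ n ih =>
    rw [sum_pi_succ n (fun z => (z.1 : ℝ) ^ (2 * k))]
    calc _ = (4 : ℝ)⁻¹ ^ n * ∑ s ∈ Fintype.piFinset (fun _ : Fin n => Sfin),
            (4 : ℝ)⁻¹ * ((((∑ i, s i).1 : ℝ) + 1) ^ (2 * k) + (((∑ i, s i).1 : ℝ) - 1) ^ (2 * k)
              + 2 * ((∑ i, s i).1 : ℝ) ^ (2 * k)) := by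
          rw [pow_succ, mul_assoc, mul_sum]
          congr 1
          refine sum_congr rfl fun s _ => ?_
          rw [sum_S]
          simp only [Prod.fst_add]
          push_cast
          ring
      _ ≤ (4 : ℝ)⁻¹ ^ n * ∑ s ∈ Fintype.piFinset (fun _ : Fin n => Sfin),
            ∑ j ∈ range (k + 1), ((2 * k).choose (2 * j) : ℝ) * gmom (k - j)
              * ((∑ i, s i).1 : ℝ) ^ (2 * j) := by
          gcongr
          exact step_bound _ k
      _ = ∑ j ∈ range (k + 1), ((2 * k).choose (2 * j) : ℝ) * gmom (k - j) *
            ((4 : ℝ)⁻¹ ^ n * ∑ s ∈ Fintype.piFinset (fun _ : Fin n => Sfin),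
              ((∑ i, s i).1 : ℝ) ^ (2 * j)) := by
          rw [sum_comm, mul_sum]
          refine sum_congr rfl fun j _ => ?_
          rw [← mul_sum]
          ring
      _ ≤ ∑ j ∈ range (k + 1), ((2 * k).choose (2 * j) : ℝ) * gmom (k - j) *
            (gmom j * (n : ℝ) ^ j) := by
          refine sum_le_sum fun j _ => mul_le_mul_of_nonneg_left (ih j) ?_
          exact mul_nonneg (Nat.cast_nonneg _) (gmom_pos _).le
      _ = gmom k * ((n + 1 : ℕ) : ℝ) ^ k := by
          push_cast
          rw [add_pow, mul_sum]
          refine sum_congr rfl fun j hj => ?_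
          have h := choose_gmom k j (by have := mem_range.1 hj; omega)
          rw [one_pow, mul_one]
          linear_combination (n : ℝ) ^ j * h
end
end

section
/- For all k, n ∈ ℕ: if n ≥ k then Q̃_k(n) ≤ 8·(32n)^k/k!, and if n < k then Q̃_k(n) ≤ 8·(32e)^k, where e is Euler's number. -/
open Finset

noncomputable section

/-- `Q̃_k := Q_{Z̃_k}` (with `Z̃_k` restricted to ℤ²). -/
noncomputable def Qtilde (k : ℕ) (n : ℕ) : ℝ := Q (fun p => Ztilde k p.1 p.2) n

def PP (m : ℕ) (x : ℝ) : ℝ := ∏ j ∈ Finset.range m, (x + ((m : ℝ) - 1) - 2 * j)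

lemma PP_succ_succ (m : ℕ) (x : ℝ) : PP (m + 2) x = PP m x * (x ^ 2 - ((m : ℝ) + 1) ^ 2) := by
  unfold PP
  rw [Finset.prod_range_succ, Finset.prod_range_succ']
  have h : ∏ j ∈ Finset.range m, (x + (((m + 2 : ℕ) : ℝ) - 1) - 2 * ((j + 1 : ℕ) : ℝ))
      = ∏ j ∈ Finset.range m, (x + ((m : ℝ) - 1) - 2 * j) := by
    refine Finset.prod_congr rfl fun j _ => ?_
    push_cast; ring
  rw [h]
  push_cast; ring

lemma F_eq (m : ℕ) (x : ℝ) : 2 ^ m * F m (x / 2) = PP m x / (m.factorial : ℝ) := by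
  unfold F gbinom PP
  rw [← mul_div_assoc]
  congr 1
  have : (2 : ℝ) ^ m = ∏ j ∈ Finset.range m, (2 : ℝ) := by simp
  rw [this, ← Finset.prod_mul_distrib]
  refine Finset.prod_congr rfl fun j _ => ?_
  ring

lemma PP_large : ∀ (m : ℕ) (x : ℝ), (m : ℝ) - 1 ≤ |x| → |PP m x| ≤ |x| ^ m
  | 0, x, _ => by simp [PP]
  | 1, x, _ => by simp [PP]
  | m + 2, x, h => by
    push_cast at h
    have ih := PP_large m x (by linarith)
    rw [PP_succ_succ, abs_mul, pow_add]
    refine mul_le_mul ih ?_ (abs_nonneg _) (by positivity)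
    rw [sq_abs, abs_le]
    have hm : (0 : ℝ) ≤ m := Nat.cast_nonneg m
    have : ((m : ℝ) + 1) ^ 2 ≤ |x| ^ 2 := pow_le_pow_left₀ (by linarith) (by linarith) 2
    rw [sq_abs] at this
    constructor <;> nlinarith

lemma large_bound (m : ℕ) (x t : ℝ) (ht : 0 < t) (h : (m : ℝ) - 1 ≤ |x|) :
    |PP m x| / (m.factorial : ℝ) ≤ (t ^ m)⁻¹ * Real.exp (t * |x|) := by
  have h1 := Real.pow_div_factorial_le_exp (t * |x|) (by positivity) m
  have h2 := PP_large m x h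
  have hp : 0 < t ^ m := by positivity
  calc |PP m x| / (m.factorial : ℝ) ≤ |x| ^ m / (m.factorial : ℝ) := by gcongr
    _ = (t ^ m)⁻¹ * ((t * |x|) ^ m / (m.factorial : ℝ)) := by
      rw [mul_pow]; field_simp
    _ ≤ _ := by gcongr

lemma PP_bound (t : ℝ) (ht : 0 < t) (ht1 : t ≤ 1) : ∀ (m : ℕ) (x : ℝ),
    |PP m x| / (m.factorial : ℝ) ≤ (t ^ m)⁻¹ * Real.exp (t * |x|)
  | 0, x => large_bound 0 x t ht (by simp; linarith [abs_nonneg x])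
  | 1, x => large_bound 1 x t ht (by simp)
  | m + 2, x => by
    by_cases h : (m : ℝ) + 1 ≤ |x|
    · exact large_bound (m + 2) x t ht (by push_cast; linarith)
    · have ih := PP_bound t ht ht1 m x
      have hm : (0 : ℝ) ≤ m := Nat.cast_nonneg m
      have hx : |x| ^ 2 ≤ ((m : ℝ) + 1) ^ 2 :=
        pow_le_pow_left₀ (abs_nonneg x) (by linarith) 2
      rw [sq_abs] at hx
      have h3 : |x ^ 2 - ((m : ℝ) + 1) ^ 2| ≤ ((m : ℝ) + 2) * (m + 1) := by
        rw [abs_le]; constructor <;> nlinarith [sq_nonneg x]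
      have hle : (t ^ m)⁻¹ ≤ (t ^ (m + 2))⁻¹ := by
        apply inv_anti₀ (by positivity)
        exact pow_le_pow_of_le_one ht.le ht1 (by omega)
      have hf : ((m + 2).factorial : ℝ) = ((m : ℝ) + 2) * (m + 1) * m.factorial := by
        rw [Nat.factorial_succ, Nat.factorial_succ]; push_cast; ring
      have hfp : (0 : ℝ) < m.factorial := by positivity
      calc |PP (m + 2) x| / ((m + 2).factorial : ℝ)
          ≤ |PP m x| * (((m : ℝ) + 2) * (m + 1)) / ((m + 2).factorial : ℝ) := by
            rw [PP_succ_succ, abs_mul]; gcongr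
        _ = |PP m x| / (m.factorial : ℝ) := by rw [hf]; field_simp
        _ ≤ (t ^ m)⁻¹ * Real.exp (t * |x|) := ih
        _ ≤ _ := by gcongr

lemma Ztilde_bound_s14 (t : ℝ) (ht : 0 < t) (ht1 : t ≤ 1) (k : ℕ) (x y : ℝ) :
    ‖Ztilde k x y‖ ≤ 2 ^ k * (t ^ k)⁻¹ * Real.exp (t * (|x| + |y|)) := by
  have e : Ztilde k x y = ∑ l ∈ Finset.range (k + 1),
      Complex.I ^ l * ((PP (k - l) x / ((k - l).factorial : ℝ) : ℝ) : ℂ) *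
        ((PP l y / (l.factorial : ℝ) : ℝ) : ℂ) := by
    unfold Ztilde Z
    rw [Finset.mul_sum]
    refine Finset.sum_congr rfl fun l hl => ?_
    have hl' : l ≤ k := by simpa [Nat.lt_succ_iff] using hl
    rw [← F_eq, ← F_eq]
    have : (2 : ℂ) ^ k = 2 ^ (k - l) * 2 ^ l := by rw [← pow_add]; congr 1; omega
    rw [this]
    push_cast; ring
  rw [e]
  have hk : ((k : ℝ) + 1) ≤ 2 ^ k := by
    have : k + 1 ≤ 2 ^ k := Nat.lt_two_pow_self
    exact_mod_cast this
  calc _ ≤ ∑ l ∈ Finset.range (k + 1), (t ^ k)⁻¹ * Real.exp (t * (|x| + |y|)) := by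
        refine norm_sum_le_of_le _ fun l hl => ?_
        have hl' : l ≤ k := by simpa [Nat.lt_succ_iff] using hl
        have h1 := PP_bound t ht ht1 (k - l) x
        have h2 := PP_bound t ht ht1 l y
        have e1 : (t ^ k)⁻¹ = (t ^ (k - l))⁻¹ * (t ^ l)⁻¹ := by
          rw [← mul_inv, ← pow_add]; congr 2; omega
        rw [norm_mul, norm_mul, norm_pow, Complex.norm_I, one_pow, one_mul,
          Complex.norm_real, Complex.norm_real, Real.norm_eq_abs, Real.norm_eq_abs,
          abs_div, abs_div, Nat.abs_cast, Nat.abs_cast, e1, mul_add, Real.exp_add]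
        calc _ ≤ ((t ^ (k - l))⁻¹ * Real.exp (t * |x|)) * ((t ^ l)⁻¹ * Real.exp (t * |y|)) := by
              gcongr
          _ = _ := by ring
    _ = ((k : ℝ) + 1) * ((t ^ k)⁻¹ * Real.exp (t * (|x| + |y|))) := by simp
    _ ≤ 2 ^ k * ((t ^ k)⁻¹ * Real.exp (t * (|x| + |y|))) := by gcongr
    _ = _ := by ring

lemma exp_sum (n : ℕ) (a b : ℝ) :
    ∑ s ∈ Fintype.piFinset (fun _ : Fin n => Sfin),
      Real.exp (a * ((∑ i, s i).1 : ℤ) + b * ((∑ i, s i).2 : ℤ))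
    = (2 * Real.cosh a + 2 * Real.cosh b) ^ n := by
  have h := (Finset.prod_univ_sum (fun _ : Fin n => Sfin)
    (fun _ p => Real.exp (a * (p.1 : ℝ) + b * (p.2 : ℝ)))).symm
  have h2 : ∑ p ∈ Sfin, Real.exp (a * (p.1 : ℝ) + b * (p.2 : ℝ))
      = 2 * Real.cosh a + 2 * Real.cosh b := by
    unfold Sfin
    rw [Finset.sum_insert (by decide), Finset.sum_insert (by decide),
      Finset.sum_insert (by decide), Finset.sum_singleton, Real.cosh_eq, Real.cosh_eq]
    simp; ring
  rw [h2] at h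
  simp only [Finset.prod_const, Finset.card_univ, Fintype.card_fin] at h
  rw [← h]
  refine Finset.sum_congr rfl fun s _ => ?_
  rw [← Real.exp_sum, Finset.sum_add_distrib, ← Finset.mul_sum, ← Finset.mul_sum,
    Prod.fst_sum, Prod.snd_sum]
  push_cast; rfl

lemma exp_abs_le (c x y : ℝ) : Real.exp (c * (|x| + |y|)) ≤
    Real.exp (c * x + c * y) + Real.exp (c * x + (-c) * y)
      + Real.exp ((-c) * x + c * y) + Real.exp ((-c) * x + (-c) * y) := by
  have h1 := Real.exp_pos (c * x + c * y)
  have h2 := Real.exp_pos (c * x + (-c) * y)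
  have h3 := Real.exp_pos ((-c) * x + c * y)
  have h4 := Real.exp_pos ((-c) * x + (-c) * y)
  rcases abs_cases x with ⟨hx, _⟩ | ⟨hx, _⟩ <;> rcases abs_cases y with ⟨hy, _⟩ | ⟨hy, _⟩ <;>
    rw [hx, hy]
  · rw [show c * (x + y) = c * x + c * y by ring]; linarith
  · rw [show c * (x + -y) = c * x + (-c) * y by ring]; linarith
  · rw [show c * (-x + y) = (-c) * x + c * y by ring]; linarith
  · rw [show c * (-x + -y) = (-c) * x + (-c) * y by ring]; linarith

lemma Qtilde_le (t : ℝ) (ht : 0 < t) (ht1 : t ≤ 1) (k n : ℕ) :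
    Qtilde k n ≤ 4 * (4 ^ k * ((t ^ 2) ^ k)⁻¹) * Real.exp (2 * t ^ 2 * n) := by
  unfold Qtilde Q
  have h1 : ∑ s ∈ Fintype.piFinset (fun _ : Fin n => Sfin),
      ‖Ztilde k ((∑ i, s i).1 : ℤ) ((∑ i, s i).2 : ℤ)‖ ^ 2
      ≤ (4 ^ k * ((t ^ 2) ^ k)⁻¹) * (4 * (4 * Real.cosh (2 * t)) ^ n) := by
    calc _ ≤ ∑ s ∈ Fintype.piFinset (fun _ : Fin n => Sfin), (4 ^ k * ((t ^ 2) ^ k)⁻¹) *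
          (Real.exp ((2*t) * ((∑ i, s i).1 : ℤ) + (2*t) * ((∑ i, s i).2 : ℤ))
          + Real.exp ((2*t) * ((∑ i, s i).1 : ℤ) + (-(2*t)) * ((∑ i, s i).2 : ℤ))
          + Real.exp ((-(2*t)) * ((∑ i, s i).1 : ℤ) + (2*t) * ((∑ i, s i).2 : ℤ))
          + Real.exp ((-(2*t)) * ((∑ i, s i).1 : ℤ) + (-(2*t)) * ((∑ i, s i).2 : ℤ))) := by
          refine Finset.sum_le_sum fun s _ => ?_
          set x : ℝ := (((∑ i, s i).1 : ℤ) : ℝ)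
          set y : ℝ := (((∑ i, s i).2 : ℤ) : ℝ)
          have hb := pow_le_pow_left₀ (norm_nonneg _) (Ztilde_bound_s14 t ht ht1 k x y) 2
          refine hb.trans ?_
          have e : (2 ^ k * (t ^ k)⁻¹ * Real.exp (t * (|x| + |y|))) ^ 2
              = (4 ^ k * ((t ^ 2) ^ k)⁻¹) * Real.exp ((2 * t) * (|x| + |y|)) := by
            rw [mul_pow, mul_pow, ← Real.exp_nat_mul, inv_pow, ← pow_mul, ← pow_mul, ← pow_mul,
              mul_comm k 2, pow_mul]
            norm_num
            left; ring
          rw [e]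
          gcongr
          exact exp_abs_le (2 * t) x y
      _ = _ := by
          rw [← Finset.mul_sum, Finset.sum_add_distrib, Finset.sum_add_distrib,
            Finset.sum_add_distrib, exp_sum, exp_sum, exp_sum, exp_sum, Real.cosh_neg]
          ring
  have hc : Real.cosh (2 * t) ^ n ≤ Real.exp (2 * t ^ 2 * n) := by
    have := Real.cosh_le_exp_half_sq (2 * t)
    calc _ ≤ Real.exp ((2 * t) ^ 2 / 2) ^ n :=
          pow_le_pow_left₀ (Real.cosh_pos _).le this n
      _ = _ := by rw [← Real.exp_nat_mul]; congr 1; ring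
  calc _ ≤ (4 : ℝ)⁻¹ ^ n * ((4 ^ k * ((t ^ 2) ^ k)⁻¹) * (4 * (4 * Real.cosh (2 * t)) ^ n)) := by
        gcongr
    _ = 4 * (4 ^ k * ((t ^ 2) ^ k)⁻¹) * Real.cosh (2 * t) ^ n := by
        rw [mul_pow, inv_pow]; field_simp
    _ ≤ _ := by gcongr

lemma Qtilde_le' (s : ℝ) (hs : 0 < s) (hs1 : s ≤ 1) (k n : ℕ) :
    Qtilde k n ≤ 4 * (4 ^ k * (s ^ k)⁻¹) * Real.exp (2 * s * n) := by
  have := Qtilde_le (Real.sqrt s) (Real.sqrt_pos.2 hs) (Real.sqrt_le_one.2 hs1) k n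
  rwa [Real.sq_sqrt hs.le] at this

theorem Qtilde_rough_bound (k n : ℕ) :
    (k ≤ n → Qtilde k n ≤ 8 * (32 * (n : ℝ)) ^ k / (Nat.factorial k : ℝ)) ∧
    (n < k → Qtilde k n ≤ 8 * (32 * Real.exp 1) ^ k) := by
  have he : Real.exp 1 ≤ 4 := by linarith [Real.exp_one_lt_d9]
  have he0 := Real.exp_pos 1
  constructor
  · intro hkn
    rcases Nat.eq_zero_or_pos k with rfl | hk
    · have hn0 : (0 : ℝ) ≤ n := Nat.cast_nonneg n
      have h := Qtilde_le' (1 / (4 * ((n : ℝ) + 1))) (by positivity)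
        (by rw [div_le_one (by positivity)]; linarith) 0 n
      have h2 : Real.exp (2 * (1 / (4 * ((n : ℝ) + 1))) * n) ≤ 2 := by
        have h3 : 2 * (1 / (4 * ((n : ℝ) + 1))) * n ≤ 1 / 2 := by
          rw [mul_one_div, div_mul_eq_mul_div, div_le_div_iff₀ (by positivity) (by norm_num)]
          linarith
        have h4 : Real.exp (1 / 2) ≤ 2 := by
          have : Real.exp (1 / 2) ^ 2 ≤ 2 ^ 2 := by
            rw [← Real.exp_nat_mul]; norm_num; exact he
          exact le_of_sq_le_sq this (by norm_num)
        exact (Real.exp_le_exp.2 h3).trans h4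
      simp only [pow_zero, Nat.factorial_zero, Nat.cast_one, inv_one, mul_one, div_one] at h ⊢
      linarith
    · have hk' : (0 : ℝ) < k := by exact_mod_cast hk
      have hn' : (0 : ℝ) < n := by exact_mod_cast (lt_of_lt_of_le hk hkn)
      have hkn' : (k : ℝ) ≤ n := by exact_mod_cast hkn
      have h := Qtilde_le' (k / (2 * (n : ℝ))) (by positivity)
        (by rw [div_le_one (by positivity)]; linarith) k n
      have hf : (k.factorial : ℝ) ≤ (k : ℝ) ^ k := by exact_mod_cast Nat.factorial_le_pow k
      have hfp : (0 : ℝ) < k.factorial := by positivity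
      have e1 : Real.exp (2 * (k / (2 * (n : ℝ))) * n) = Real.exp 1 ^ k := by
        rw [← Real.exp_nat_mul]; congr 1; field_simp
      rw [e1] at h
      calc _ ≤ _ := h
        _ = 4 * (8 * Real.exp 1 * n) ^ k / (k : ℝ) ^ k := by
          rw [div_pow, inv_div, show 8 * Real.exp 1 * (n : ℝ) = 4 * (2 * n) * Real.exp 1 by ring]
          simp only [mul_pow]
          ring
        _ ≤ 8 * (32 * (n : ℝ)) ^ k / (Nat.factorial k : ℝ) := by
          gcongr
          · norm_num
          · linarith
  · intro hnk
    have h := Qtilde_le' 1 one_pos le_rfl k n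
    have h1 : Real.exp (2 * 1 * n) ≤ (Real.exp 1 * Real.exp 1) ^ k := by
      rw [← Real.exp_add, ← Real.exp_nat_mul]
      apply Real.exp_le_exp.2
      have : (n : ℝ) ≤ k := by exact_mod_cast hnk.le
      linarith
    calc _ ≤ _ := h
      _ ≤ 4 * (4 ^ k * (1 ^ k)⁻¹) * (Real.exp 1 * Real.exp 1) ^ k := by gcongr
      _ = 4 * (4 * Real.exp 1 * Real.exp 1) ^ k := by
        simp only [one_pow, inv_one, mul_pow]; ring
      _ ≤ _ := by
        gcongr
        · norm_num
        · linarith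
end
end

section
/- Let k ∈ ℕ and let a, b ∈ ℝ with a ≥ 2k and b ≥ 0. Then Σ_{j∈ℕ, j≤k, j > 6ekb/a} binom(a, k−j)·binom(b, j) ≤ (1/2)·binom(a, k), where e is Euler's number. -/
open Finset

noncomputable section

theorem gbinom_zero' (x : ℝ) : gbinom x 0 = 1 := by simp [gbinom]

theorem gbinom_succ' (x : ℝ) (n : ℕ) :
    gbinom x (n + 1) = gbinom x n * ((x - n) / ((n : ℝ) + 1)) := by
  unfold gbinom
  rw [Finset.prod_range_succ, Nat.factorial_succ]
  have h1 : ((n : ℝ) + 1) ≠ 0 := by positivity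
  have h2 : ((n.factorial : ℕ) : ℝ) ≠ 0 := by positivity
  push_cast
  field_simp

theorem gbinom_nonneg' (x : ℝ) (n : ℕ) (h : ∀ i : ℕ, i < n → (i : ℝ) ≤ x) : 0 ≤ gbinom x n := by
  unfold gbinom
  refine div_nonneg (Finset.prod_nonneg ?_) (by positivity)
  intro i hi
  have := h i (Finset.mem_range.1 hi)
  linarith

theorem gbinom_le_pow (x : ℝ) (n : ℕ) (h : ∀ i : ℕ, i < n → (i : ℝ) ≤ x) :
    gbinom x n ≤ x ^ n / (n.factorial : ℝ) := by
  unfold gbinom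
  gcongr
  calc ∏ j ∈ Finset.range n, (x - j) ≤ ∏ j ∈ Finset.range n, x := by
        apply Finset.prod_le_prod
        · intro i hi
          have := h i (Finset.mem_range.1 hi)
          linarith
        · intro i _
          have : (0 : ℝ) ≤ i := by positivity
          linarith
    _ = x ^ n := by simp

theorem gbinom_ceil_le_one (b : ℝ) (n : ℕ) (h : ∀ i : ℕ, i < n → (i : ℝ) ≤ b) (hn : b ≤ n) :
    gbinom b n ≤ 1 := by
  unfold gbinom
  rw [div_le_one (by positivity)]
  have : ((n.factorial : ℕ) : ℝ) = ∏ j ∈ Finset.range n, ((n : ℝ) - j) := by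
    rw [← Finset.prod_range_add_one_eq_factorial, ← Finset.prod_range_reflect]
    push_cast
    apply Finset.prod_congr rfl
    intro i hi
    have := Finset.mem_range.1 hi
    rw [Nat.sub_sub, Nat.cast_sub (by omega)]
    push_cast
    ring
  rw [this]
  apply Finset.prod_le_prod
  · intro i hi
    have := h i (Finset.mem_range.1 hi)
    linarith
  · intro i _
    linarith

/-- Beyond the first index `M ≥ b`, the coefficients are at most `1/2` in absolute value. -/
theorem gbinom_abs_le_half (b : ℝ) (hb : 0 ≤ b) (M : ℕ) (h : ∀ i : ℕ, i < M → (i : ℝ) ≤ b)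
    (hM : b ≤ M) (hM1 : (M : ℝ) < b + 1) (n : ℕ) (hn : M + 1 ≤ n) : |gbinom b n| ≤ 1 / 2 := by
  induction n, hn using Nat.le_induction with
  | base =>
    rw [gbinom_succ', abs_mul, abs_div]
    have h1 : |gbinom b M| ≤ 1 := by
      rw [abs_of_nonneg (gbinom_nonneg' b M h)]
      exact gbinom_ceil_le_one b M h hM
    have h2 : |b - M| / |(M : ℝ) + 1| ≤ 1 / 2 := by
      rcases Nat.eq_zero_or_pos M with h0 | h0
      · subst h0
        have : b = 0 := le_antisymm (by simpa using hM) hb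
        subst this
        simp
      · have h3 : (1 : ℝ) ≤ M := by exact_mod_cast h0
        rw [abs_of_nonpos (by linarith), abs_of_pos (by linarith), div_le_iff₀ (by linarith)]
        linarith
    calc _ ≤ 1 * (1 / 2 : ℝ) := by gcongr
      _ = _ := by norm_num
  | succ n hn ih =>
    rw [gbinom_succ', abs_mul, abs_div]
    have h0 : (M : ℝ) + 1 ≤ n := by exact_mod_cast hn
    have h2 : |b - n| / |(n : ℝ) + 1| ≤ 1 := by
      rw [abs_of_nonpos (by linarith), abs_of_pos (by linarith), div_le_one (by linarith)]
      linarith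
    calc _ ≤ (1 / 2 : ℝ) * 1 := by gcongr
      _ = _ := by norm_num

theorem gbinom_shift (k : ℕ) (hk : 0 < k) (a : ℝ) (ha : 2 * (k : ℝ) ≤ a) (j : ℕ) (hj : j ≤ k) :
    gbinom a (k - j) ≤ (2 * k / a) ^ j * gbinom a k := by
  have hk' : (0 : ℝ) < k := by exact_mod_cast hk
  have ha0 : 0 < a := by linarith
  induction j with
  | zero => simp
  | succ j ih =>
    have ih := ih (by omega)
    obtain ⟨n, hn⟩ : ∃ n, n = k - (j + 1) := ⟨_, rfl⟩
    have hn1 : k - j = n + 1 := by omega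
    rw [← hn]
    rw [hn1, gbinom_succ'] at ih
    have hnk : (n : ℝ) + 1 ≤ k := by exact_mod_cast (by omega : n + 1 ≤ k)
    have hpos : 0 ≤ gbinom a n := by
      apply gbinom_nonneg'
      intro i hi
      have : (i : ℝ) ≤ n := by exact_mod_cast hi.le
      linarith
    have h1 : 1 ≤ (2 * k / a) * ((a - n) / ((n : ℝ) + 1)) := by
      rw [div_mul_div_comm, one_le_div (by positivity)]
      have : k * a ≤ 2 * k * (a - n) := by nlinarith
      nlinarith
    calc gbinom a n ≤ gbinom a n * ((2 * k / a) * ((a - n) / ((n : ℝ) + 1))) :=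
          le_mul_of_one_le_right hpos h1
      _ = (2 * k / a) * (gbinom a n * ((a - n) / ((n : ℝ) + 1))) := by ring
      _ ≤ (2 * k / a) * ((2 * k / a) ^ j * gbinom a k) := by gcongr
      _ = _ := by ring

/-- The alternating tail is a fraction of its first term. -/
theorem alt_tail (k : ℕ) (a b : ℝ) (ha : 2 * (k : ℝ) ≤ a) (hb : 0 ≤ b) (d : ℕ) :
    ∀ n : ℕ, n + d = k → b ≤ n → ∃ c : ℝ, 0 ≤ c ∧ c ≤ 1 ∧
      ∑ j ∈ Finset.Ico n (k + 1), gbinom a (k - j) * gbinom b j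
        = c * (gbinom a (k - n) * gbinom b n) := by
  induction d with
  | zero =>
    intro n hn _
    obtain rfl : n = k := by omega
    exact ⟨1, by norm_num, le_rfl, by simp⟩
  | succ d ih =>
    intro n hn hbn
    obtain ⟨c, hc0, hc1, hc⟩ := ih (n + 1) (by omega) (by push_cast; linarith)
    rw [Finset.sum_eq_sum_Ico_succ_bot (by omega), hc]
    have h1 : k - n = d + 1 := by omega
    have h2 : k - (n + 1) = d := by omega
    rw [h1, h2, gbinom_succ' a, gbinom_succ' b]
    have hk : (n : ℝ) + (d + 1) = k := by exact_mod_cast hn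
    have hn0 : (0 : ℝ) ≤ n := by positivity
    have hd0 : (0 : ℝ) ≤ d := by positivity
    have had : (d : ℝ) + 1 ≤ a - d := by linarith
    have hq0 : 0 ≤ ((d : ℝ) + 1) / (a - d) := div_nonneg (by linarith) (by linarith)
    have hq1 : ((d : ℝ) + 1) / (a - d) ≤ 1 := (div_le_one (by linarith)).2 had
    have hr0 : 0 ≤ ((n : ℝ) - b) / (n + 1) := div_nonneg (by linarith) (by linarith)
    have hr1 : ((n : ℝ) - b) / (n + 1) ≤ 1 := (div_le_one (by linarith)).2 (by linarith)
    have hm0 := mul_nonneg hc0 (mul_nonneg hq0 hr0)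
    have hm1 := mul_le_one₀ hc1 (mul_nonneg hq0 hr0) (mul_le_one₀ hq1 hr0 hr1)
    refine ⟨1 - c * (((d : ℝ) + 1) / (a - d) * (((n : ℝ) - b) / (n + 1))), by linarith,
      by linarith, ?_⟩
    have e1 : a - d ≠ 0 := by linarith
    have e2 : (d : ℝ) + 1 ≠ 0 := by linarith
    have e3 : (n : ℝ) + 1 ≠ 0 := by linarith
    field_simp
    ring

theorem term_bound (k : ℕ) (hk : 0 < k) (a b : ℝ) (ha : 2 * (k : ℝ) ≤ a) (hb : 0 ≤ b) (j : ℕ)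
    (hj : j ≤ k) (h : ∀ i : ℕ, i < j → (i : ℝ) ≤ b)
    (hc : 6 * Real.exp 1 * (k : ℝ) * b / a < (j : ℝ)) (hA : 0 ≤ gbinom a k) :
    gbinom a (k - j) * gbinom b j ≤ gbinom a k * (1 / 3) ^ j := by
  have hk' : (0 : ℝ) < k := by exact_mod_cast hk
  have ha0 : 0 < a := by linarith
  have h1 := gbinom_shift k hk a ha j hj
  have h2 := gbinom_le_pow b j h
  have h3 := gbinom_nonneg' b j h
  have h4 : (2 * k / a * b) ^ j / (j.factorial : ℝ) ≤ (1 / 3) ^ j := by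
    have hle : 2 * k / a * b ≤ (1 / 3) * (j / Real.exp 1) := by
      rw [← mul_div_assoc, le_div_iff₀ (Real.exp_pos 1)]
      have : 6 * Real.exp 1 * (k : ℝ) * b / a = 3 * (2 * k / a * b * Real.exp 1) := by
        field_simp
        ring
      linarith
    have he := Real.pow_div_factorial_le_exp (j : ℝ) (by positivity) j
    have he2 : Real.exp (j : ℝ) = Real.exp 1 ^ j := by
      rw [← Real.exp_nat_mul, mul_one]
    calc (2 * k / a * b) ^ j / (j.factorial : ℝ)
        ≤ ((1 / 3) * (j / Real.exp 1)) ^ j / (j.factorial : ℝ) := by gcongr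
      _ = (1 / 3) ^ j * (((j : ℝ) ^ j / (j.factorial : ℝ)) / Real.exp 1 ^ j) := by
          rw [mul_pow, div_pow (j : ℝ)]
          field_simp
      _ ≤ (1 / 3) ^ j * 1 := by
          gcongr
          rw [div_le_one (by positivity), ← he2]
          exact he
      _ = _ := mul_one _
  calc gbinom a (k - j) * gbinom b j
      ≤ ((2 * k / a) ^ j * gbinom a k) * (b ^ j / (j.factorial : ℝ)) := by gcongr
    _ = gbinom a k * ((2 * k / a * b) ^ j / (j.factorial : ℝ)) := by
        rw [mul_pow]; ring
    _ ≤ _ := by gcongr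

theorem head_bound (k : ℕ) (hk : 0 < k) (a b : ℝ) (ha : 2 * (k : ℝ) ≤ a) (hb : 0 ≤ b)
    (hA : 0 ≤ gbinom a k) (M : ℕ) (h : ∀ i : ℕ, i < M → (i : ℝ) ≤ b) (hM : b ≤ M) (d : ℕ) :
    ∀ n : ℕ, n + d = M → 6 * Real.exp 1 * (k : ℝ) * b / a < (n : ℝ) →
      ∑ j ∈ Finset.Ico n (k + 1), gbinom a (k - j) * gbinom b j
        ≤ gbinom a k * (3 / 2 * (1 / 3) ^ n) := by
  induction d with
  | zero =>
    intro n hn hc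
    obtain rfl : n = M := by omega
    by_cases hnk : n ≤ k
    · obtain ⟨c, hc0, hc1, hs⟩ := alt_tail k a b ha hb (k - n) n (by omega) hM
      rw [hs]
      have ht := term_bound k hk a b ha hb n hnk h hc hA
      have hp : 0 ≤ gbinom a k * (1 / 3) ^ n := by positivity
      nlinarith
    · rw [Finset.Ico_eq_empty (by omega), Finset.sum_empty]
      positivity
  | succ d ih =>
    intro n hn hc
    by_cases hnk : n ≤ k
    · have ih := ih (n + 1) (by omega) (by push_cast; linarith)
      rw [Finset.sum_eq_sum_Ico_succ_bot (by omega)]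
      have ht := term_bound k hk a b ha hb n hnk (fun i hi => h i (by omega)) hc hA
      rw [pow_succ] at ih
      linarith
    · rw [Finset.Ico_eq_empty (by omega), Finset.sum_empty]
      positivity

theorem sum_tail_estimate (k : ℕ) (a b : ℝ) (ha : 2 * (k : ℝ) ≤ a) (hb : 0 ≤ b) :
    ∑ j ∈ (Finset.range (k + 1)).filter
        (fun j : ℕ => 6 * Real.exp 1 * (k : ℝ) * b / a < (j : ℝ)),
      gbinom a (k - j) * gbinom b j ≤ (1 / 2) * gbinom a k := by
  rcases Nat.eq_zero_or_pos k with hk | hk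
  · subst hk
    simp [Finset.sum_filter, gbinom_zero']
  have hk' : (0 : ℝ) < k := by exact_mod_cast hk
  have ha0 : 0 < a := by linarith
  have hA : 0 ≤ gbinom a k := by
    apply gbinom_nonneg'
    intro i hi
    have : (i : ℝ) ≤ k := by exact_mod_cast hi.le
    linarith
  have hc0 : 0 ≤ 6 * Real.exp 1 * (k : ℝ) * b / a := by positivity
  obtain ⟨N, hN⟩ : ∃ N, N = ⌊6 * Real.exp 1 * (k : ℝ) * b / a⌋₊ + 1 := ⟨_, rfl⟩
  have hset : (Finset.range (k + 1)).filter
      (fun j : ℕ => 6 * Real.exp 1 * (k : ℝ) * b / a < (j : ℝ)) = Finset.Ico N (k + 1) := by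
    ext j
    rw [Finset.mem_filter, Finset.mem_range, Finset.mem_Ico, ← Nat.floor_lt hc0]
    omega
  have hNc : 6 * Real.exp 1 * (k : ℝ) * b / a < (N : ℝ) := by
    rw [hN]; push_cast; exact Nat.lt_floor_add_one _
  rw [hset]
  obtain ⟨M, hMdef⟩ : ∃ M, M = ⌈b⌉₊ := ⟨_, rfl⟩
  have hM : b ≤ M := hMdef ▸ Nat.le_ceil b
  have hM1 : (M : ℝ) < b + 1 := hMdef ▸ Nat.ceil_lt_add_one hb
  have h : ∀ i : ℕ, i < M → (i : ℝ) ≤ b := by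
    intro i hi
    have : (i : ℝ) + 1 ≤ M := by exact_mod_cast hi
    linarith
  by_cases hNM : N ≤ M
  · have hh := head_bound k hk a b ha hb hA M h hM (M - N) N (by omega) hNc
    have hp : (1 / 3 : ℝ) ^ N ≤ 1 / 3 := by
      rw [hN, pow_succ]
      have : (1 / 3 : ℝ) ^ ⌊6 * Real.exp 1 * (k : ℝ) * b / a⌋₊ ≤ 1 :=
        pow_le_one₀ (by norm_num) (by norm_num)
      linarith
    have : gbinom a k * (3 / 2 * (1 / 3) ^ N) ≤ gbinom a k * (3 / 2 * (1 / 3)) := by gcongr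
    linarith
  · by_cases hNk : N ≤ k
    · have hbN : b ≤ N := by
        have : (M : ℝ) ≤ N := by exact_mod_cast (by omega : M ≤ N)
        linarith
      obtain ⟨c, hc0, hc1, hs⟩ := alt_tail k a b ha hb (k - N) N (by omega) hbN
      rw [hs]
      have hB := gbinom_abs_le_half b hb M h hM hM1 N (by omega)
      have hG := gbinom_shift k hk a ha N hNk
      have hG0 : 0 ≤ gbinom a (k - N) := by
        apply gbinom_nonneg'
        intro i hi
        have : (i : ℝ) ≤ k := by exact_mod_cast (by omega : i ≤ k)
        linarith
      have ht : (2 * k / a) ^ N ≤ 1 :=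
        pow_le_one₀ (by positivity) ((div_le_one ha0).2 ha)
      have hG1 : gbinom a (k - N) ≤ gbinom a k :=
        hG.trans (mul_le_of_le_one_left hA ht)
      calc c * (gbinom a (k - N) * gbinom b N)
          ≤ 1 * (gbinom a k * (1 / 2)) := by
            have : gbinom a (k - N) * gbinom b N ≤ gbinom a k * (1 / 2) :=
              (mul_le_mul_of_nonneg_left ((le_abs_self _).trans hB) hG0).trans
                (mul_le_mul_of_nonneg_right hG1 (by norm_num))
            exact (mul_le_mul_of_nonneg_left this hc0).trans
              (mul_le_mul_of_nonneg_right hc1 (by positivity))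
        _ = _ := by ring
    · rw [Finset.Ico_eq_empty (by omega), Finset.sum_empty]
      positivity
end
end
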